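/- Fix ε ∈ (0, 0.5) and a compound-dispersion DMC W with V_min > 0, and set β := √(V_min/V_max) < 1. Define f(α) := ε(α − 1) − (1 − β)·φ(2√2·Φ^{-1}(αε))·(1/√(2π) − φ(√2·Φ^{-1}(αε))). Then there exists α with 1 < α < 1/(2ε) such that f(α) < 0, and for any such α, liminf_{n→∞} (log M*_fb(n, ε) − nC)/√n ≥ √(V_ε)·Φ^{-1}(αε) > √(V_ε)·Φ^{-1}(ε). -/

import Mathlib

open MeasureTheory Real Filter Set
open scoped BigOperators ENNReal Classical

noncomputable section

namespace Paper

variable {X Y : Type*} [Fintype X] [Fintype Y]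

/-- `P` is a probability mass function on the finite alphabet `X`. -/
def IsDist (P : X → ℝ) : Prop := (∀ x, 0 ≤ P x) ∧ ∑ x, P x = 1

/-- `W` is a discrete memoryless channel (a stochastic matrix). -/
def IsChannel (W : X → Y → ℝ) : Prop := ∀ x, IsDist (W x)

/-- `W` has no all-zero column. -/
def NoZeroColumn (W : X → Y → ℝ) : Prop := ∀ y, ∃ x, 0 < W x y

/-- Output distribution induced by input distribution `P` through `W`. -/
def outDist (P : X → ℝ) (W : X → Y → ℝ) (y : Y) : ℝ := ∑ x, P x * W x y

/-- Mutual information `I(P; W)` (in nats). -/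
def mutInfo (P : X → ℝ) (W : X → Y → ℝ) : ℝ :=
  ∑ x, ∑ y, P x * W x y * Real.log (W x y / outDist P W y)

/-- Shannon capacity `C`. -/
def capacity (W : X → Y → ℝ) : ℝ :=
  sSup {c | ∃ P, IsDist P ∧ mutInfo P W = c}

/-- The set of capacity-achieving input distributions `Π*`. -/
def capacityAchievers (W : X → Y → ℝ) : Set (X → ℝ) :=
  {P | IsDist P ∧ mutInfo P W = capacity W}

/-- The (unique) capacity-achieving output distribution `q*`. -/
def qStar (W : X → Y → ℝ) : Y → ℝ :=
  if h : (capacityAchievers W).Nonempty then outDist h.choose W else fun _ => 0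

/-- The information density `i*(x,y) = log (W(y|x)/q*(y))`. -/
def iStar (W : X → Y → ℝ) (x : X) (y : Y) : ℝ := Real.log (W x y / qStar W y)

/-- `ν_x = Var[i*(x,Y)]`, `Y ~ W(·|x)`. -/
def nu (W : X → Y → ℝ) (x : X) : ℝ :=
  ∑ y, W x y * (iStar W x y) ^ 2 - (∑ y, W x y * iStar W x y) ^ 2

/-- `V_min`. -/
def Vmin (W : X → Y → ℝ) : ℝ :=
  sInf {v | ∃ P ∈ capacityAchievers W, v = ∑ x, P x * nu W x}

/-- `V_max`. -/
def Vmax (W : X → Y → ℝ) : ℝ :=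
  sSup {v | ∃ P ∈ capacityAchievers W, v = ∑ x, P x * nu W x}

/-- `V_ε`. -/
def Veps (W : X → Y → ℝ) (ε : ℝ) : ℝ := if ε < 1/2 then Vmin W else Vmax W

/-- `ν_min = min_x ν_x`. -/
def numin (W : X → Y → ℝ) [Nonempty X] : ℝ := ⨅ x, nu W x

/-- `ν_max = max_x ν_x`. -/
def numax (W : X → Y → ℝ) [Nonempty X] : ℝ := ⨆ x, nu W x

/-- Average error probability of the feedback code `(enc, dec)` with `M` messages
and blocklength `n`. -/
def errProb (W : X → Y → ℝ) (n M : ℕ) (enc : Fin M → List Y → X)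
    (dec : (Fin n → Y) → Fin M) : ℝ :=
  (M : ℝ)⁻¹ * ∑ m : Fin M, ∑ y : Fin n → Y,
    (∏ k : Fin n, W (enc m ((List.ofFn y).take (k : ℕ))) (y k)) *
      (if dec y = m then 0 else 1)

/-- Minimum average error probability of `(n,R)` feedback codes. -/
def minErr (W : X → Y → ℝ) (n : ℕ) (R : ℝ) : ℝ :=
  sInf {e | ∃ enc dec, e = errProb W n ⌈Real.exp (n * R)⌉₊ enc dec}

/-- `M*_fb(n, ε)`. -/
def Mfb (W : X → Y → ℝ) (n : ℕ) (ε : ℝ) : ℝ :=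
  sSup {m | ∃ R : ℝ, m = (⌈Real.exp (n * R)⌉₊ : ℝ) ∧ minErr W n R ≤ ε}

/-- Standard Gaussian density `φ`. -/
def gpdf (u : ℝ) : ℝ := (Real.sqrt (2 * Real.pi))⁻¹ * Real.exp (-u ^ 2 / 2)

/-- Standard Gaussian CDF `Φ`. -/
def gcdf (t : ℝ) : ℝ := ∫ u in Set.Iic t, gpdf u

/-- Inverse Gaussian CDF `Φ⁻¹`. -/
def gcdfInv : ℝ → ℝ := Function.invFun gcdf

/-- The sequence `(log M*_fb(n,ε) - nC)/√n` whose liminf/limsup is the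
second-order coding rate with feedback. -/
def SOfb (W : X → Y → ℝ) (ε : ℝ) (n : ℕ) : ℝ :=
  (Real.log (Mfb W n ε) - n * capacity W) / Real.sqrt n

section

open ProbabilityTheory

lemma gpdf_eq_gaussianPDFReal (x : ℝ) : gpdf x = gaussianPDFReal 0 1 x := by
  simp [gpdf, gaussianPDFReal]

lemma gpdf_pos (x : ℝ) : 0 < gpdf x := by
  rw [gpdf_eq_gaussianPDFReal]; exact gaussianPDFReal_pos _ _ _ one_ne_zero

lemma integrable_gpdf : Integrable gpdf := by
  rw [funext gpdf_eq_gaussianPDFReal]; exact integrable_gaussianPDFReal _ _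

lemma continuous_gpdf : Continuous gpdf := by
  unfold gpdf; fun_prop

lemma gpdf_zero : gpdf 0 = (√(2 * π))⁻¹ := by simp [gpdf]

lemma gpdf_neg (x : ℝ) : gpdf (-x) = gpdf x := by simp [gpdf]

lemma gpdf_le_of_sq_le {x y : ℝ} (h : x ^ 2 ≤ y ^ 2) : gpdf y ≤ gpdf x := by
  unfold gpdf
  gcongr

lemma hasDerivAt_gpdf (x : ℝ) : HasDerivAt gpdf (-x * gpdf x) x := by
  unfold gpdf
  have h : HasDerivAt (fun u : ℝ => -u ^ 2 / 2) (-x) x := by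
    convert! ((hasDerivAt_pow 2 x).neg).div_const 2 using 1
    simp
    ring
  convert! (h.exp).const_mul (√(2 * π))⁻¹ using 1
  ring

lemma gcdf_eq_measureReal (t : ℝ) : gcdf t = (gaussianReal 0 1).real (Iic t) := by
  rw [measureReal_def, gaussianReal_apply_eq_integral _ one_ne_zero, ENNReal.toReal_ofReal]
  · simp only [gcdf, gpdf_eq_gaussianPDFReal]
  · exact integral_nonneg fun x => gaussianPDFReal_nonneg _ _ _

lemma gcdf_eq_cdf (t : ℝ) : gcdf t = cdf (gaussianReal 0 1) t := by
  rw [gcdf_eq_measureReal, cdf_eq_real]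

lemma gcdf_nonneg (t : ℝ) : 0 ≤ gcdf t := by
  rw [gcdf_eq_cdf]; exact cdf_nonneg _ _

lemma gcdf_le_one (t : ℝ) : gcdf t ≤ 1 := by
  rw [gcdf_eq_cdf]; exact cdf_le_one _ _

lemma tendsto_gcdf_atBot : Tendsto gcdf atBot (nhds 0) := by
  rw [funext gcdf_eq_cdf]; exact tendsto_cdf_atBot _

lemma tendsto_gcdf_atTop : Tendsto gcdf atTop (nhds 1) := by
  rw [funext gcdf_eq_cdf]; exact tendsto_cdf_atTop _

lemma gcdf_sub (a b : ℝ) : gcdf b - gcdf a = ∫ x in a..b, gpdf x :=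
  intervalIntegral.integral_Iic_sub_Iic integrable_gpdf.integrableOn integrable_gpdf.integrableOn

lemma strictMono_gcdf : StrictMono gcdf := fun a b hab => by
  have := intervalIntegral.intervalIntegral_pos_of_pos
    (integrable_gpdf.intervalIntegrable (a := a) (b := b)) gpdf_pos hab
  rw [← gcdf_sub] at this
  linarith

lemma continuous_gcdf : Continuous gcdf := by
  have h : gcdf = fun b => gcdf 0 + ∫ x in (0 : ℝ)..b, gpdf x := by
    ext b; rw [← gcdf_sub]; ring
  rw [h]
  exact continuous_const.add
    (intervalIntegral.continuous_primitive (fun _ _ => integrable_gpdf.intervalIntegrable) 0)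

lemma gcdf_zero : gcdf 0 = 1 / 2 := by
  have h1 : gcdf 0 = ∫ x in Ioi (0 : ℝ), gpdf x := by
    have := integral_comp_neg_Iic (0 : ℝ) gpdf
    simpa [gpdf_neg, gcdf] using this
  have h2 : (∫ x in Iic (0 : ℝ), gpdf x) + ∫ x in Ioi (0 : ℝ), gpdf x = ∫ x, gpdf x := by
    rw [← compl_Iic]
    exact integral_add_compl measurableSet_Iic integrable_gpdf
  have h3 : ∫ x, gpdf x = 1 := by
    simp only [gpdf_eq_gaussianPDFReal]
    exact integral_gaussianPDFReal_eq_one 0 one_ne_zero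
  have h4 : gcdf 0 = ∫ x in Iic (0 : ℝ), gpdf x := rfl
  linarith

lemma gcdfInv_gcdf (u : ℝ) : gcdfInv (gcdf u) = u :=
  Function.leftInverse_invFun strictMono_gcdf.injective u

lemma exists_gcdf_eq {p : ℝ} (h0 : 0 < p) (h1 : p < 1) : ∃ t, gcdf t = p := by
  obtain ⟨a, ha⟩ := (tendsto_gcdf_atBot.eventually (gt_mem_nhds h0)).exists
  obtain ⟨b, hb⟩ := (tendsto_gcdf_atTop.eventually (lt_mem_nhds h1)).exists
  exact mem_range_of_exists_le_of_exists_ge continuous_gcdf ⟨a, ha.le⟩ ⟨b, hb.le⟩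

lemma gcdf_gcdfInv {p : ℝ} (h0 : 0 < p) (h1 : p < 1) : gcdf (gcdfInv p) = p :=
  Function.invFun_eq (exists_gcdf_eq h0 h1)

lemma gcdf_sub_gcdf_mul_ge {β w : ℝ} (hβ0 : 0 ≤ β) (hβ1 : β ≤ 1) (hw : 0 ≤ w) :
    (1 - β) * (w * gpdf w) ≤ gcdf w - gcdf (β * w) := by
  have hle : β * w ≤ w := mul_le_of_le_one_left hw hβ1
  have h : ∫ _ in (β * w)..w, gpdf w ≤ ∫ x in (β * w)..w, gpdf x :=
    intervalIntegral.integral_mono_on hle intervalIntegrable_const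
      integrable_gpdf.intervalIntegrable fun x hx =>
        gpdf_le_of_sq_le (pow_le_pow_left₀ ((mul_nonneg hβ0 hw).trans hx.1) hx.2 2)
  rw [gcdf_sub]
  refine le_trans (le_of_eq ?_) h
  simp
  ring

lemma integral_gcdf_sqrt_two_mul_sub (u : ℝ) :
    ∫ z, gcdf (√2 * u - z) ∂gaussianReal 0 1 = gcdf u := by
  have hmap : (gaussianReal 0 1).map (√2 * ·) = gaussianReal 0 2 := by
    rw [gaussianReal_map_const_mul]
    congr 1
    · simp
    · ext; simp
  have hconv : gaussianReal 0 1 ∗ gaussianReal 0 1 = gaussianReal 0 2 := by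
    rw [gaussianReal_conv_gaussianReal]; norm_num
  have h1 : (gaussianReal 0 2) (Iic (√2 * u)) = (gaussianReal 0 1) (Iic u) := by
    rw [← hmap, Measure.map_apply (by fun_prop) measurableSet_Iic]
    congr 1
    ext x
    simp
  have h2 : (gaussianReal 0 2) (Iic (√2 * u))
      = ∫⁻ z, (gaussianReal 0 1) (Iic (√2 * u - z)) ∂gaussianReal 0 1 := by
    rw [← hconv, Measure.conv, Measure.map_apply (by fun_prop) measurableSet_Iic,
      Measure.prod_apply (measurableSet_Iic.preimage (by fun_prop))]
    congr with z
    congr 1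
    ext x
    simp [le_sub_iff_add_le']
  have h3 : ∀ z, (gaussianReal 0 1) (Iic (√2 * u - z)) = ENNReal.ofReal (gcdf (√2 * u - z)) := by
    intro z
    rw [gcdf_eq_measureReal, ofReal_measureReal]
  rw [integral_eq_lintegral_of_nonneg_ae (ae_of_all _ fun z => gcdf_nonneg _)
    (continuous_gcdf.comp (by fun_prop)).aestronglyMeasurable]
  simp only [← h3]
  rw [← h2, h1, gcdf_eq_measureReal, measureReal_def]

/-- Error probability, in the Gaussian limit, of the scheme that switches to the noisier input
distribution when the first phase falls short of the threshold `a`. -/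
def switchErr (β a z : ℝ) : ℝ := if a ≤ z then gcdf (a - z) else gcdf (β * (a - z))

lemma continuous_switchErr (β a : ℝ) : Continuous (switchErr β a) := by
  refine Continuous.if_le ?_ ?_ continuous_const continuous_id ?_
  · exact continuous_gcdf.comp (by fun_prop)
  · exact continuous_gcdf.comp (by fun_prop)
  · intro x hx; simp [← hx]

lemma switchErr_nonneg (β a z : ℝ) : 0 ≤ switchErr β a z := by
  unfold switchErr; split_ifs <;> exact gcdf_nonneg _

lemma switchErr_le_one (β a z : ℝ) : switchErr β a z ≤ 1 := by
  unfold switchErr; split_ifs <;> exact gcdf_le_one _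

lemma integrable_of_continuous_of_mem_Icc {g : ℝ → ℝ} (hg : Continuous g)
    (h0 : ∀ z, 0 ≤ g z) (h1 : ∀ z, g z ≤ 1) : Integrable g (gaussianReal 0 1) :=
  Integrable.of_bound hg.aestronglyMeasurable 1
    (ae_of_all _ fun z => by rw [Real.norm_eq_abs, abs_of_nonneg (h0 z)]; exact h1 z)

lemma integral_sub_mul_gpdf (a : ℝ) :
    ∫ z in (2 * a)..a, (a - z) * gpdf (a - z) = gpdf 0 - gpdf a := by
  rw [intervalIntegral.integral_eq_sub_of_hasDerivAt (f := fun z => gpdf (a - z))]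
  · simp only [sub_self]
    rw [← gpdf_neg a]; ring_nf
  · intro x _
    have h := (hasDerivAt_gpdf (a - x)).comp x ((hasDerivAt_id x).const_sub a)
    convert! h using 1
    ring
  · apply Continuous.intervalIntegrable
    have := continuous_gpdf
    fun_prop

lemma integral_switchErr_le {β u : ℝ} (hβ0 : 0 ≤ β) (hβ1 : β ≤ 1) (hu : u < 0) :
    ∫ z, switchErr β (√2 * u) z ∂gaussianReal 0 1 ≤
      gcdf u - (1 - β) * gpdf (2 * √2 * u) * ((√(2 * π))⁻¹ - gpdf (√2 * u)) := by
  set a := √2 * u with ha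
  have ha0 : a < 0 := mul_neg_of_pos_of_neg (by positivity) hu
  have hg : Continuous fun z => gcdf (a - z) := continuous_gcdf.comp (by fun_prop)
  have hgi : Integrable (fun z => gcdf (a - z)) (gaussianReal 0 1) :=
    integrable_of_continuous_of_mem_Icc hg (fun _ => gcdf_nonneg _) (fun _ => gcdf_le_one _)
  have hsi := integrable_of_continuous_of_mem_Icc (continuous_switchErr β a)
    (switchErr_nonneg β a) (switchErr_le_one β a)
  have hnn : ∀ z, 0 ≤ gcdf (a - z) - switchErr β a z := by
    intro z
    unfold switchErr
    split_ifs with h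
    · simp
    · have hw : 0 ≤ a - z := by linarith
      have := gcdf_sub_gcdf_mul_ge hβ0 hβ1 hw
      have := mul_nonneg (sub_nonneg.2 hβ1) (mul_nonneg hw (gpdf_pos (a - z)).le)
      linarith
  have hkey : (1 - β) * gpdf (2 * a) * (gpdf 0 - gpdf a) ≤
      ∫ z, (gcdf (a - z) - switchErr β a z) ∂gaussianReal 0 1 := by
    rw [integral_gaussianReal_eq_integral_smul one_ne_zero]
    simp only [← gpdf_eq_gaussianPDFReal, smul_eq_mul]
    have hcont : Continuous fun z => gpdf z * (gcdf (a - z) - switchErr β a z) :=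
      continuous_gpdf.mul (hg.sub (continuous_switchErr β a))
    have h_integral : Integrable fun z => gpdf z * (gcdf (a - z) - switchErr β a z) := by
      refine integrable_gpdf.mono hcont.aestronglyMeasurable (ae_of_all _ fun z => ?_)
      rw [norm_mul]
      refine mul_le_of_le_one_right (norm_nonneg _) ?_
      rw [Real.norm_eq_abs, abs_of_nonneg (hnn z)]
      have := gcdf_le_one (a - z)
      have := switchErr_nonneg β a z
      linarith
    have hset : ∫ z in Ioc (2 * a) a, gpdf z * (gcdf (a - z) - switchErr β a z) ≤
        ∫ z, gpdf z * (gcdf (a - z) - switchErr β a z) :=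
      setIntegral_le_integral h_integral (ae_of_all _ fun z => mul_nonneg (gpdf_pos z).le (hnn z))
    refine le_trans ?_ hset
    rw [← intervalIntegral.integral_of_le (by linarith), ← integral_sub_mul_gpdf,
      ← intervalIntegral.integral_const_mul]
    refine intervalIntegral.integral_mono_on (by linarith) (Continuous.intervalIntegrable ?_ _ _)
      (hcont.intervalIntegrable _ _) ?_
    · have := continuous_gpdf
      fun_prop
    · intro z hz
      have hw : 0 ≤ a - z := by linarith [hz.2]
      have h1 := gcdf_sub_gcdf_mul_ge hβ0 hβ1 hw
      have h2 : gpdf (2 * a) ≤ gpdf z := gpdf_le_of_sq_le (by nlinarith [hz.1, hz.2])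
      have h3 : (1 - β) * ((a - z) * gpdf (a - z)) ≤ gcdf (a - z) - switchErr β a z := by
        rcases hz.2.eq_or_lt with h | h
        · rw [h]; simpa using hnn a
        · simpa [switchErr, not_le.2 h] using h1
      calc (1 - β) * gpdf (2 * a) * ((a - z) * gpdf (a - z))
          = gpdf (2 * a) * ((1 - β) * ((a - z) * gpdf (a - z))) := by ring
        _ ≤ gpdf z * (gcdf (a - z) - switchErr β a z) :=
          mul_le_mul h2 h3 (mul_nonneg (sub_nonneg.2 hβ1) (mul_nonneg hw (gpdf_pos _).le))
            (gpdf_pos z).le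
  rw [integral_sub hgi hsi, ha, integral_gcdf_sqrt_two_mul_sub, ← ha] at hkey
  rw [gpdf_zero] at hkey
  have : 2 * √2 * u = 2 * a := by rw [ha]; ring
  rw [this]
  linarith

/-- Normalised sum of the scores `g` of the letters of a word. -/
def normSum {E : Type*} (g : E → ℝ) {N : ℕ} (e : Fin N → E) : ℝ :=
  (√(N : ℝ))⁻¹ * ∑ k, g (e k)

lemma exists_tendsto_probabilityMeasure_normSum {E : Type*} [Fintype E] {p : E → ℝ}
    (hp : IsDist p) {g : E → ℝ} (h0 : ∑ x, p x * g x = 0) (h1 : ∑ x, p x * g x ^ 2 = 1) :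
    ∃ μs : ℕ → ProbabilityMeasure ℝ,
      Tendsto μs atTop (nhds ⟨gaussianReal 0 1, inferInstance⟩) ∧
      ∀ (N : ℕ) (f : ℝ → ℝ), Measurable f →
        ∫ x, f x ∂(μs N : Measure ℝ) =
          ∑ e : Fin N → E, (∏ k, p (e k)) * f (normSum g e) := by
  let _ : MeasurableSpace E := ⊤
  let P : PMF E := PMF.ofFintype (fun x => ENNReal.ofReal (p x)) (by
    rw [← ENNReal.ofReal_sum_of_nonneg fun x _ => hp.1 x, hp.2, ENNReal.ofReal_one])
  have hPr : ∀ x, (P x).toReal = p x := fun x => by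
    simp [P, PMF.ofFintype_apply, ENNReal.toReal_ofReal (hp.1 x)]
  let μ : Measure E := P.toMeasure
  let Pinf : Measure (ℕ → E) := Measure.infinitePi fun _ => μ
  let S : ℕ → (ℕ → E) → ℝ := fun i ω => g (ω i)
  have hgm : Measurable g := measurable_from_top
  have hSm : ∀ i, Measurable (S i) := fun i => hgm.comp (measurable_pi_apply i)
  have h_integral : ∀ f : E → ℝ, ∀ i, ∫ ω, f (ω i) ∂Pinf = ∑ x, p x * f x := by
    intro f i
    have hmap : Pinf.map (fun ω => ω i) = μ := Measure.infinitePi_map_eval (fun _ => μ) i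
    rw [← integral_map (φ := fun ω : ℕ → E => ω i) (measurable_pi_apply i).aemeasurable
      (f := f) (Measurable.aestronglyMeasurable measurable_from_top), hmap, PMF.integral_eq_sum]
    simp [hPr]
  have hident : ∀ i, IdentDistrib (S i) (S 0) Pinf Pinf := fun i =>
    ⟨(hSm i).aemeasurable, (hSm 0).aemeasurable, by
      have : ∀ j, Pinf.map (S j) = μ.map g := fun j => by
        have hmap : Pinf.map (fun ω => ω j) = μ := Measure.infinitePi_map_eval (fun _ => μ) j
        rw [← hmap, Measure.map_map hgm (measurable_pi_apply j)]
        rfl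
      rw [this, this]⟩
  have hindep : iIndepFun S Pinf := iIndepFun_infinitePi (X := fun _ => g) fun _ => hgm
  have hclt := tendstoInDistribution_inv_sqrt_mul_sum (Y := (id : ℝ → ℝ)) (P' := gaussianReal 0 1)
    (X := S) ⟨aemeasurable_id, Measure.map_id⟩ (by rw [← h0]; exact h_integral g 0)
    (by rw [← h1]; exact h_integral (fun x => g x ^ 2) 0) hindep hident
  refine ⟨_, by simpa using hclt.tendsto, fun N f hf => ?_⟩
  have hres : Pinf.map (fun ω (k : Fin N) => ω k) = Measure.pi fun _ => μ := by
    rw [← Measure.infinitePi_eq_pi]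
    exact Measure.map_infinitePi_infinitePi_of_inj (P := fun _ : ℕ => μ) Fin.val_injective
  have hfac : (fun ω : ℕ → E => (√(N : ℝ))⁻¹ * ∑ k ∈ Finset.range N, S k ω) =
      fun ω => normSum g fun k : Fin N => ω k := by
    ext ω
    rw [normSum, Finset.sum_range]
  have hnm : Measurable (normSum g : (Fin N → E) → ℝ) := by
    unfold normSum
    exact measurable_const.mul
      (Finset.measurable_sum _ fun k _ => hgm.comp (measurable_pi_apply k))
  have hrm : Measurable fun (ω : ℕ → E) (k : Fin N) => ω k := by fun_prop
  change ∫ x, f x ∂(Pinf.map fun ω : ℕ → E => (√(N : ℝ))⁻¹ * ∑ k ∈ Finset.range N, S k ω) = _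
  rw [hfac, integral_map (φ := fun ω : ℕ → E => normSum g fun k : Fin N => ω k)
    (hnm.comp hrm).aemeasurable hf.aestronglyMeasurable,
    ← integral_map (φ := fun (ω : ℕ → E) (k : Fin N) => ω k) (f := fun e => f (normSum g e))
      hrm.aemeasurable (hf.comp hnm).aestronglyMeasurable, hres, integral_fintype .of_finite]
  refine Finset.sum_congr rfl fun e _ => ?_
  rw [measureReal_def, Measure.pi_singleton, ENNReal.toReal_prod, smul_eq_mul]
  congr 1
  refine Finset.prod_congr rfl fun k _ => ?_
  rw [← hPr, PMF.toMeasure_apply_singleton _ _ (MeasurableSet.singleton _)]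

/-- Central limit theorem for words with i.i.d. letters, tested against a continuous function. -/
lemma tendsto_sum_continuous_normSum {E : Type*} [Fintype E] {p : E → ℝ}
    (hp : IsDist p) {g : E → ℝ} (h0 : ∑ x, p x * g x = 0) (h1 : ∑ x, p x * g x ^ 2 = 1)
    {f : ℝ → ℝ} (hf : Continuous f) {B : ℝ} (hB : ∀ x, |f x| ≤ B) :
    Tendsto (fun N : ℕ => ∑ e : Fin N → E, (∏ k, p (e k)) * f (normSum g e)) atTop
      (nhds (∫ x, f x ∂gaussianReal 0 1)) := by
  obtain ⟨μs, hμ, hs⟩ := exists_tendsto_probabilityMeasure_normSum hp h0 h1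
  have := (ProbabilityMeasure.tendsto_iff_forall_integral_tendsto.1 hμ)
    (BoundedContinuousFunction.ofNormedAddCommGroup f hf B hB)
  refine this.congr fun N => ?_
  exact hs N f hf.measurable

/-- Central limit theorem for words with i.i.d. letters, in terms of distribution functions. -/
lemma tendsto_sum_indicator_normSum {E : Type*} [Fintype E] {p : E → ℝ}
    (hp : IsDist p) {g : E → ℝ} (h0 : ∑ x, p x * g x = 0) (h1 : ∑ x, p x * g x ^ 2 = 1) (t : ℝ) :
    Tendsto (fun N : ℕ => ∑ e : Fin N → E, (∏ k, p (e k)) * if normSum g e ≤ t then 1 else 0)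
      atTop (nhds (gcdf t)) := by
  obtain ⟨μs, hμ, hs⟩ := exists_tendsto_probabilityMeasure_normSum hp h0 h1
  have := nullSingletonClass_gaussianReal (μ := 0) (v := 1) one_ne_zero
  have := ProbabilityMeasure.tendsto_measure_of_null_frontier_of_tendsto' hμ (E := Iic t)
    (by rw [frontier_Iic]; exact measure_singleton (μ := gaussianReal 0 1) t)
  have h2 := (ENNReal.tendsto_toReal (measure_ne_top (gaussianReal 0 1) _)).comp this
  rw [gcdf_eq_measureReal]
  refine h2.congr fun N => ?_
  have h3 := hs N ((Iic t).indicator 1) (measurable_one.indicator measurableSet_Iic)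
  rw [integral_indicator_one measurableSet_Iic] at h3
  rw [Function.comp_apply, ← measureReal_def, h3]
  refine Finset.sum_congr rfl fun e _ => ?_
  simp [indicator_apply]

/-- A sequence of distribution functions converging pointwise to the Gaussian one is eventually
uniformly close to it. -/
lemma eventually_le_gcdf_add {F : ℕ → ℝ → ℝ} (hmono : ∀ n, Monotone (F n))
    (h1 : ∀ n t, F n t ≤ 1) (hF : ∀ t, Tendsto (fun n => F n t) atTop (nhds (gcdf t)))
    {η : ℝ} (hη : 0 < η) : ∀ᶠ n in atTop, ∀ t, F n t ≤ gcdf t + η := by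
  obtain ⟨K, hK⟩ := exists_nat_gt (2 / η)
  have hK0 : (0 : ℝ) < K := lt_trans (by positivity) hK
  have hKη : 1 / (K : ℝ) < η / 2 := by
    rw [div_lt_iff₀ hη] at hK
    rw [div_lt_iff₀ hK0]
    linarith
  have hex : ∀ i : ℕ, ∃ t, 0 < i → i < K → gcdf t = i / K := by
    intro i
    by_cases h : 0 < i ∧ i < K
    · obtain ⟨t, ht⟩ := exists_gcdf_eq (p := (i : ℝ) / K)
        (div_pos (by exact_mod_cast h.1) hK0)
        ((div_lt_one hK0).2 (by exact_mod_cast h.2))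
      exact ⟨t, fun _ _ => ht⟩
    · exact ⟨0, fun h1 h2 => absurd ⟨h1, h2⟩ h⟩
  choose t ht using hex
  have hev : ∀ᶠ n in atTop, ∀ i ∈ Finset.range K, F n (t i) ≤ gcdf (t i) + η / 2 := by
    rw [Filter.eventually_all_finset]
    intro i _
    filter_upwards [(hF (t i)).eventually (gt_mem_nhds (show gcdf (t i) < gcdf (t i) + η / 2 by
      linarith))] with n hn using hn.le
  filter_upwards [hev] with n hn s
  set i := ⌊gcdf s * K⌋₊ + 1 with hi
  have hfl : (⌊gcdf s * K⌋₊ : ℝ) ≤ gcdf s * K :=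
    Nat.floor_le (mul_nonneg (gcdf_nonneg s) hK0.le)
  have hlt : gcdf s * K < i := by rw [hi]; push_cast; exact Nat.lt_floor_add_one _
  by_cases hiK : i < K
  · have hti := ht i (Nat.succ_pos _) hiK
    have hst : s < t i := by
      rw [← strictMono_gcdf.lt_iff_lt, hti, lt_div_iff₀ hK0]
      exact hlt
    have hbound : (i : ℝ) / K ≤ gcdf s + 1 / K := by
      rw [div_le_iff₀ hK0, add_mul, one_div, inv_mul_cancel₀ hK0.ne', hi]
      push_cast
      linarith
    have := hn i (Finset.mem_range.2 hiK)
    have := hmono n hst.le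
    linarith
  · have : (K : ℝ) ≤ i := by exact_mod_cast not_lt.1 hiK
    have h2 : (K : ℝ) - 1 ≤ gcdf s * K := by
      have : (i : ℝ) = ⌊gcdf s * K⌋₊ + 1 := by rw [hi]; push_cast; rfl
      linarith
    have h3 : 1 - 1 / (K : ℝ) ≤ gcdf s := by
      have : 1 - 1 / (K : ℝ) = (K - 1) / K := by field_simp
      rw [this, div_le_iff₀ hK0]
      exact h2
    have := h1 n s
    linarith

/-- Distribution function of the normalised score sum of a word with i.i.d. letters. -/
def wordCDF {E : Type*} [Fintype E] (p g : E → ℝ) (N : ℕ) (t : ℝ) : ℝ :=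
  ∑ e : Fin N → E, (∏ k, p (e k)) * if normSum g e ≤ t then 1 else 0

lemma sum_prod_eq_one {E : Type*} [Fintype E] {p : E → ℝ} (hp : ∑ x, p x = 1) (N : ℕ) :
    ∑ e : Fin N → E, ∏ k, p (e k) = 1 := by
  have h := Finset.prod_univ_sum (fun _ : Fin N => (Finset.univ : Finset E)) (fun _ x => p x)
  rw [Fintype.piFinset_univ] at h
  rw [← h]
  simp [hp]

lemma monotone_wordCDF {E : Type*} [Fintype E] {p : E → ℝ} (hp : IsDist p) (g : E → ℝ) (N : ℕ) :
    Monotone (wordCDF p g N) := by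
  intro s t hst
  refine Finset.sum_le_sum fun e _ =>
    mul_le_mul_of_nonneg_left ?_ (Finset.prod_nonneg fun k _ => hp.1 _)
  split_ifs with h1 h2
  · exact le_rfl
  · exact absurd (h1.trans hst) h2
  · exact zero_le_one
  · exact le_rfl

lemma wordCDF_le_one {E : Type*} [Fintype E] {p : E → ℝ} (hp : IsDist p) (g : E → ℝ) (N : ℕ)
    (t : ℝ) : wordCDF p g N t ≤ 1 := by
  rw [← sum_prod_eq_one hp.2 N]
  refine Finset.sum_le_sum fun e _ => ?_
  refine mul_le_of_le_one_right (Finset.prod_nonneg fun k _ => hp.1 _) ?_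
  split_ifs <;> norm_num

lemma eventually_sum_switch_le {E : Type*} [Fintype E] {p p' g g' : E → ℝ}
    (hp : IsDist p) (h0 : ∑ x, p x * g x = 0) (h1 : ∑ x, p x * g x ^ 2 = 1)
    (hp' : IsDist p') (h0' : ∑ x, p' x * g' x = 0) (h1' : ∑ x, p' x * g' x ^ 2 = 1)
    (β a : ℝ) {η : ℝ} (hη : 0 < η) :
    ∀ᶠ N : ℕ in atTop, ∑ e : Fin N → E, (∏ k, p (e k)) *
        (if a ≤ normSum g e then wordCDF p g N (a - normSum g e)
          else wordCDF p' g' N (β * (a - normSum g e))) ≤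
      ∫ z, switchErr β a z ∂gaussianReal 0 1 + η := by
  have hη2 := half_pos hη
  have hlim := tendsto_sum_continuous_normSum hp h0 h1 (continuous_switchErr β a) (B := 1)
    fun x => abs_le.2 ⟨by linarith [switchErr_nonneg β a x], switchErr_le_one β a x⟩
  filter_upwards [eventually_le_gcdf_add (fun N => monotone_wordCDF hp g N)
      (fun N => wordCDF_le_one hp g N) (tendsto_sum_indicator_normSum hp h0 h1) hη2,
    eventually_le_gcdf_add (fun N => monotone_wordCDF hp' g' N)
      (fun N => wordCDF_le_one hp' g' N) (tendsto_sum_indicator_normSum hp' h0' h1') hη2,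
    hlim.eventually (gt_mem_nhds (lt_add_of_pos_right _ hη2))] with N hN hN' hN''
  have hle : ∑ e : Fin N → E, (∏ k, p (e k)) *
        (if a ≤ normSum g e then wordCDF p g N (a - normSum g e)
          else wordCDF p' g' N (β * (a - normSum g e))) ≤
      ∑ e : Fin N → E, (∏ k, p (e k)) * (switchErr β a (normSum g e) + η / 2) := by
    refine Finset.sum_le_sum fun e _ =>
      mul_le_mul_of_nonneg_left ?_ (Finset.prod_nonneg fun k _ => hp.1 _)
    unfold switchErr
    split_ifs
    · exact hN _
    · exact hN' _
  simp only [mul_add, Finset.sum_add_distrib, ← Finset.sum_mul, sum_prod_eq_one hp.2,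
    one_mul] at hle
  linarith

/-- One-shot achievability by greedy codeword selection: every codeword `c m` of the code has
error probability at most the probability that the likelihood ratio falls below `γ`, plus `M / γ`. -/
lemma exists_code_of_likelihood_ratio {C D : Type*} [Fintype C] [Fintype D] {Q : C → ℝ}
    (hQ : IsDist Q) {K : C → D → ℝ} (hK : IsChannel K) {q : D → ℝ}
    (hq : ∀ y, ∑ c, Q c * K c y = q y) {γ : ℝ} (hγ : 0 < γ) {M : ℕ} (hM : 0 < M) :
    ∃ (c : Fin M → C) (dec : D → Fin M), ∀ m,
      ∑ y, K (c m) y * (if dec y = m then 0 else 1) ≤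
        ∑ c, Q c * ∑ y, K c y * (if K c y ≤ γ * q y then 1 else 0) + M / γ := by
  set B := ∑ c, Q c * ∑ y, K c y * (if K c y ≤ γ * q y then 1 else 0) + M / γ with hB
  let D' : C → D → Prop := fun c y => γ * q y < K c y
  have hqD : ∀ c, ∑ y, q y * (if D' c y then 1 else 0) ≤ 1 / γ := by
    intro c
    have hone : 1 / γ = ∑ y, K c y / γ := by rw [← Finset.sum_div, (hK c).2]
    rw [hone]
    refine Finset.sum_le_sum fun y _ => ?_
    split_ifs with h
    · rw [le_div_iff₀ hγ, mul_one]
      have : γ * q y < K c y := h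
      linarith
    · simpa using div_nonneg ((hK c).1 y) hγ.le
  have hC : Nonempty C := by
    by_contra h
    rw [not_nonempty_iff] at h
    have := hQ.2
    simp at this
  have key : ∀ M' ≤ M, ∃ c : ℕ → C, ∀ m < M',
      ∑ y, K (c m) y * (if D' (c m) y ∧ ∀ j < m, ¬ D' (c j) y then 0 else 1) ≤ B := by
    intro M'
    induction M' with
    | zero => exact fun _ => ⟨fun _ => hC.some, fun m hm => absurd hm (Nat.not_lt_zero m)⟩
    | succ M' ih =>
      intro hM'
      obtain ⟨c, hc⟩ := ih (by omega)
      obtain ⟨x, hx⟩ : ∃ x, ∑ y, K x y *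
          (if D' x y ∧ ∀ j < M', ¬ D' (c j) y then 0 else 1) ≤ B := by
        by_contra! hcon
        have hgt : B < ∑ x, Q x * ∑ y, K x y *
            (if D' x y ∧ ∀ j < M', ¬ D' (c j) y then 0 else 1) := by
          have hB1 : B = ∑ x, Q x * B := by rw [← Finset.sum_mul, hQ.2, one_mul]
          rw [hB1]
          refine Finset.sum_lt_sum
            (fun x _ => mul_le_mul_of_nonneg_left (hcon x).le (hQ.1 x)) ?_
          by_contra! hz
          have hall : ∀ x, Q x = 0 := fun x => by
            by_contra hne
            have hpos := lt_of_le_of_ne (hQ.1 x) (Ne.symm hne)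
            exact absurd (hz x (Finset.mem_univ x))
              (not_le.2 (mul_lt_mul_of_pos_left (hcon x) hpos))
          have := hQ.2
          simp [hall] at this
        have hle : ∑ x, Q x * ∑ y, K x y *
            (if D' x y ∧ ∀ j < M', ¬ D' (c j) y then 0 else 1) ≤
            ∑ x, Q x * ∑ y, K x y * ((if K x y ≤ γ * q y then 1 else 0) +
              ∑ j ∈ Finset.range M', if D' (c j) y then 1 else 0) := by
          refine Finset.sum_le_sum fun x _ => mul_le_mul_of_nonneg_left
            (Finset.sum_le_sum fun y _ => mul_le_mul_of_nonneg_left ?_ ((hK x).1 y)) (hQ.1 x)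
          have hnn : (0 : ℝ) ≤ ∑ j ∈ Finset.range M', if D' (c j) y then 1 else 0 :=
            Finset.sum_nonneg fun j _ => by split_ifs <;> norm_num
          by_cases h1 : D' x y
          · by_cases h2 : ∀ j < M', ¬ D' (c j) y
            · rw [if_pos ⟨h1, h2⟩]
              split_ifs <;> linarith
            · push Not at h2
              obtain ⟨j, hj, hjD⟩ := h2
              have h3 : (if D' (c j) y then (1 : ℝ) else 0) ≤
                  ∑ j ∈ Finset.range M', if D' (c j) y then 1 else 0 :=
                Finset.single_le_sum (f := fun j => if D' (c j) y then (1 : ℝ) else 0)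
                  (fun j _ => by split_ifs <;> norm_num) (Finset.mem_range.2 hj)
              rw [if_pos hjD] at h3
              split_ifs <;> linarith
          · have h4 : K x y ≤ γ * q y := not_lt.1 h1
            rw [if_pos h4]
            split_ifs <;> linarith
        have heq : ∑ x, Q x * ∑ y, K x y * ((if K x y ≤ γ * q y then 1 else 0) +
              ∑ j ∈ Finset.range M', if D' (c j) y then 1 else 0) =
            ∑ x, Q x * ∑ y, K x y * (if K x y ≤ γ * q y then 1 else 0) +
              ∑ j ∈ Finset.range M', ∑ y, q y * (if D' (c j) y then 1 else 0) := by
          simp only [mul_add, Finset.sum_add_distrib]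
          congr 1
          simp only [← hq, Finset.mul_sum, Finset.sum_mul]
          rw [Finset.sum_comm]
          conv_rhs => rw [Finset.sum_comm]
          refine Finset.sum_congr rfl fun y _ => ?_
          rw [Finset.sum_comm]
          refine Finset.sum_congr rfl fun j _ => Finset.sum_congr rfl fun x _ => ?_
          ring
        have hsum : ∑ j ∈ Finset.range M', ∑ y, q y * (if D' (c j) y then (1 : ℝ) else 0) ≤
            M / γ := by
          refine (Finset.sum_le_sum fun j _ => hqD (c j)).trans ?_
          rw [Finset.sum_const, Finset.card_range, nsmul_eq_mul, mul_one_div]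
          gcongr
          omega
        linarith
      refine ⟨Function.update c M' x, fun m hm => ?_⟩
      have hupd : ∀ j < M', Function.update c M' x j = c j := fun j hj =>
        Function.update_of_ne hj.ne _ _
      rcases (Nat.lt_succ_iff_lt_or_eq.1 hm) with h | h
      · have h' : ∀ y, (∀ j < m, ¬ D' (Function.update c M' x j) y) ↔ ∀ j < m, ¬ D' (c j) y :=
          fun y => forall₂_congr fun j hj => by rw [hupd j (hj.trans h)]
        simp only [hupd m h, h']
        exact hc m h
      · subst h
        have h' : ∀ y, (∀ j < m, ¬ D' (Function.update c m x j) y) ↔ ∀ j < m, ¬ D' (c j) y :=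
          fun y => forall₂_congr fun j hj => by rw [hupd j hj]
        simp only [Function.update_self, h']
        exact hx
  obtain ⟨c, hc⟩ := key M le_rfl
  let good : Fin M → D → Prop := fun m y => D' (c m) y ∧ ∀ j < (m : ℕ), ¬ D' (c j) y
  refine ⟨fun m => c m, fun y => if h : ∃ m, good m y then h.choose else ⟨0, hM⟩, fun m => ?_⟩
  refine le_trans (Finset.sum_le_sum fun y _ => ?_) (hc m m.2)
  refine mul_le_mul_of_nonneg_left ?_ ((hK _).1 y)
  by_cases hg : good m y
  · have hex : ∃ m, good m y := ⟨m, hg⟩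
    have huniq : hex.choose = m := by
      have hs := hex.choose_spec
      rcases lt_trichotomy hex.choose m with h | h | h
      · exact absurd hs.1 (hg.2 _ h)
      · exact h
      · exact absurd hg.1 (hs.2 _ h)
    beta_reduce
    rw [dif_pos hex, if_pos huniq]
    split_ifs <;> norm_num
  · have hg' : ¬ (D' (c m) y ∧ ∀ j < (m : ℕ), ¬ D' (c j) y) := hg
    rw [if_neg hg']
    split_ifs <;> norm_num

lemma sum_sum_mul_ite_eq {A : Type*} [Fintype A] {p p' : A → ℝ} (hp : ∑ a, p a = 1)
    (hp' : ∑ a, p' a = 1) (s : Prop) (h : A → ℝ) :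
    ∑ u, ∑ v, p u * p' v * h (if s then u else v) =
      if s then ∑ w, p w * h w else ∑ w, p' w * h w := by
  by_cases hs : s
  · simp only [if_pos hs]
    refine Finset.sum_congr rfl fun u _ => ?_
    have : ∀ v, p u * p' v * h u = p u * h u * p' v := fun v => by ring
    simp only [this, ← Finset.mul_sum, hp', mul_one]
  · simp only [if_neg hs]
    rw [Finset.sum_comm]
    refine Finset.sum_congr rfl fun v _ => ?_
    have : ∀ u, p u * p' v * h v = p' v * h v * p u := fun u => by ring
    simp only [this, ← Finset.mul_sum, hp, mul_one]

lemma IsDist.prod {A B : Type*} [Fintype A] [Fintype B] {p : A → ℝ} {p' : B → ℝ}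
    (hp : IsDist p) (hp' : IsDist p') : IsDist fun c : A × B => p c.1 * p' c.2 := by
  refine ⟨fun c => mul_nonneg (hp.1 _) (hp'.1 _), ?_⟩
  rw [Fintype.sum_prod_type]
  simp only [← Finset.mul_sum, hp'.2, mul_one, hp.2]

/-- Achievability for two uses of a channel with feedback, where the second codeword is drawn
according to `p` or `p'` depending on the outcome `s` of the first use. -/
lemma exists_two_use_code {A B : Type*} [Fintype A] [Fintype B] {p p' : A → ℝ} (hp : IsDist p)
    (hp' : IsDist p') {K : A → B → ℝ} (hK : IsChannel K) {q : B → ℝ}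
    (hq : ∀ y, ∑ a, p a * K a y = q y) (hq' : ∀ y, ∑ a, p' a * K a y = q y)
    (s : A → B → Prop) {γ : ℝ} (hγ : 0 < γ) {M : ℕ} (hM : 0 < M) :
    ∃ (c : Fin M → A × A × A) (dec : B × B → Fin M), ∀ m,
      ∑ y : B × B, K (c m).1 y.1 * K (if s (c m).1 y.1 then (c m).2.1 else (c m).2.2) y.2 *
          (if dec y = m then 0 else 1) ≤
        ∑ a, ∑ y, p a * K a y *
          (if s a y then
            ∑ w, p w * ∑ z, K w z * (if K a y * K w z ≤ γ * (q y * q z) then 1 else 0)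
          else
            ∑ w, p' w * ∑ z, K w z * (if K a y * K w z ≤ γ * (q y * q z) then 1 else 0)) +
          M / γ := by
  have hQ := hp.prod (hp.prod hp')
  have hK2 : IsChannel fun (c : A × A × A) (y : B × B) =>
      K c.1 y.1 * K (if s c.1 y.1 then c.2.1 else c.2.2) y.2 := by
    refine fun c => ⟨fun y => mul_nonneg ((hK _).1 _) ((hK _).1 _), ?_⟩
    rw [Fintype.sum_prod_type]
    refine Eq.trans (Finset.sum_congr rfl fun y _ => ?_) (hK c.1).2
    have h : ∑ z, K c.1 y * K (if s c.1 y then c.2.1 else c.2.2) z = K c.1 y := by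
      rw [← Finset.mul_sum, (hK _).2, mul_one]
    exact h
  have hmarg : ∀ H : A → B → A → B → ℝ, ∑ c : A × A × A, p c.1 * (p c.2.1 * p' c.2.2) *
      ∑ y : B × B, K c.1 y.1 * H c.1 y.1 (if s c.1 y.1 then c.2.1 else c.2.2) y.2 =
      ∑ a, ∑ y, p a * K a y * (if s a y then ∑ w, p w * ∑ z, H a y w z
        else ∑ w, p' w * ∑ z, H a y w z) := by
    intro H
    rw [Fintype.sum_prod_type]
    refine Finset.sum_congr rfl fun a _ => ?_
    have hs : ∀ y, (if s a y then ∑ w, p w * ∑ z, H a y w z else ∑ w, p' w * ∑ z, H a y w z) =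
        ∑ u, ∑ v, p u * p' v * ∑ z, H a y (if s a y then u else v) z := fun y =>
      (sum_sum_mul_ite_eq hp.2 hp'.2 (s a y) fun w => ∑ z, H a y w z).symm
    simp only [hs]
    simp only [Fintype.sum_prod_type, Finset.mul_sum]
    conv_rhs => rw [Finset.sum_comm]
    refine Finset.sum_congr rfl fun u _ => ?_
    conv_rhs => rw [Finset.sum_comm]
    refine Finset.sum_congr rfl fun v _ => Finset.sum_congr rfl fun y _ =>
      Finset.sum_congr rfl fun z _ => ?_
    ring
  have hout : ∀ y : B × B, ∑ c : A × A × A, p c.1 * (p c.2.1 * p' c.2.2) *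
      (K c.1 y.1 * K (if s c.1 y.1 then c.2.1 else c.2.2) y.2) = q y.1 * q y.2 := by
    rintro ⟨y, z⟩
    rw [Fintype.sum_prod_type, ← hq y, Finset.sum_mul]
    refine Finset.sum_congr rfl fun a _ => ?_
    have h := sum_sum_mul_ite_eq hp.2 hp'.2 (s a y) (fun w => K w z)
    rw [hq z, hq' z, ite_self] at h
    rw [Fintype.sum_prod_type, ← h, Finset.mul_sum]
    refine Finset.sum_congr rfl fun u _ => ?_
    rw [Finset.mul_sum]
    refine Finset.sum_congr rfl fun v _ => ?_
    ring
  obtain ⟨c, dec, hc⟩ := exists_code_of_likelihood_ratio hQ hK2 hout hγ hM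
  refine ⟨c, dec, fun m => (hc m).trans (le_of_eq ?_)⟩
  congr 1
  rw [← hmarg fun a y w z => K w z * (if K a y * K w z ≤ γ * (q y * q z) then 1 else 0)]
  simp only [mul_assoc]

lemma sum_prod_eq_prod_sum {E : Type*} [Fintype E] {N : ℕ} (f : Fin N → E → ℝ) :
    ∑ e : Fin N → E, ∏ k, f k (e k) = ∏ k, ∑ x, f k x := by
  rw [Finset.prod_univ_sum, Fintype.piFinset_univ]

lemma IsDist.pi {E : Type*} [Fintype E] {N : ℕ} {p : Fin N → E → ℝ} (hp : ∀ k, IsDist (p k)) :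
    IsDist fun e : Fin N → E => ∏ k, p k (e k) :=
  ⟨fun _ => Finset.prod_nonneg fun k _ => (hp k).1 _, by
    rw [sum_prod_eq_prod_sum]
    exact Finset.prod_eq_one fun k _ => (hp k).2⟩

/-- The feedback encoder of blocklength `N + N` which sends the word `c.1` and then, depending on
whether the first `N` outputs satisfy `s`, the word `c.2.1` or `c.2.2`. -/
def twoPhaseEnc [Nonempty X] {N : ℕ} (s : (Fin N → X) → (Fin N → Y) → Prop)
    (c : (Fin N → X) × (Fin N → X) × (Fin N → X)) (l : List Y) : X :=
  if h : l.length < N then c.1 ⟨l.length, h⟩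
  else if h2 : l.length - N < N then
    (if s c.1 (fun j => l[(j : ℕ)]'(by omega)) then c.2.1 else c.2.2) ⟨l.length - N, h2⟩
  else Classical.arbitrary X

lemma prod_twoPhaseEnc {X Y : Type*} [Nonempty X] {N : ℕ} (W : X → Y → ℝ)
    (s : (Fin N → X) → (Fin N → Y) → Prop) (c : (Fin N → X) × (Fin N → X) × (Fin N → X))
    (y z : Fin N → Y) :
    ∏ k : Fin (N + N), W (twoPhaseEnc s c ((List.ofFn (Fin.append y z)).take (k : ℕ)))
        (Fin.append y z k) =
      (∏ k, W (c.1 k) (y k)) * ∏ k, W ((if s c.1 y then c.2.1 else c.2.2) k) (z k) := by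
  rw [Fin.prod_univ_add]
  congr 1
  · refine Finset.prod_congr rfl fun k _ => ?_
    rw [Fin.append_left]
    have hl : ((List.ofFn (Fin.append y z)).take (Fin.castAdd N k : ℕ)).length = k := by
      simp; omega
    have hlt : ((List.ofFn (Fin.append y z)).take (Fin.castAdd N k : ℕ)).length < N := by
      rw [hl]; exact k.2
    rw [twoPhaseEnc, dif_pos hlt]
    have hk : (⟨_, hlt⟩ : Fin N) = k := Fin.ext hl
    rw [hk]
  · refine Finset.prod_congr rfl fun k _ => ?_
    rw [Fin.append_right]
    have hl : ((List.ofFn (Fin.append y z)).take (Fin.natAdd N k : ℕ)).length = N + k := by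
      simp [add_comm]
    rw [twoPhaseEnc, dif_neg (by omega), dif_pos (by omega)]
    have hy : (fun j : Fin N => ((List.ofFn (Fin.append y z)).take (Fin.natAdd N k : ℕ))[(j : ℕ)]'(
        by omega)) = y := by
      funext j
      rw [List.getElem_take, List.getElem_ofFn]
      exact Fin.append_left y z j
    have hk : (⟨((List.ofFn (Fin.append y z)).take (Fin.natAdd N k : ℕ)).length - N, by omega⟩ :
        Fin N) = k := Fin.ext (by simp only [hl]; omega)
    rw [hy, hk]

/-- Two-phase feedback codes for a memoryless channel. -/
lemma exists_twoPhase_code {W : X → Y → ℝ} (hW : IsChannel W) {P P' : X → ℝ} (hP : IsDist P)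
    (hP' : IsDist P') {q : Y → ℝ} (hq : outDist P W = q) (hq' : outDist P' W = q) {N : ℕ}
    (s : (Fin N → X) → (Fin N → Y) → Prop) {γ : ℝ} (hγ : 0 < γ) {M : ℕ} (hM : 0 < M) :
    ∃ (enc : Fin M → List Y → X) (dec : (Fin (N + N) → Y) → Fin M),
      errProb W (N + N) M enc dec ≤
        ∑ a : Fin N → X, ∑ y : Fin N → Y, (∏ k, P (a k)) * (∏ k, W (a k) (y k)) *
          (if s a y then
            ∑ w : Fin N → X, (∏ k, P (w k)) * ∑ z : Fin N → Y, (∏ k, W (w k) (z k)) *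
              (if (∏ k, W (a k) (y k)) * (∏ k, W (w k) (z k)) ≤
                γ * ((∏ k, q (y k)) * ∏ k, q (z k)) then 1 else 0)
          else
            ∑ w : Fin N → X, (∏ k, P' (w k)) * ∑ z : Fin N → Y, (∏ k, W (w k) (z k)) *
              (if (∏ k, W (a k) (y k)) * (∏ k, W (w k) (z k)) ≤
                γ * ((∏ k, q (y k)) * ∏ k, q (z k)) then 1 else 0)) + M / γ := by
  have hX : Nonempty X := by
    by_contra h
    rw [not_nonempty_iff] at h
    have := hP.2
    simp at this
  have hout : ∀ {R : X → ℝ}, outDist R W = q → ∀ y : Fin N → Y,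
      ∑ a : Fin N → X, (∏ k, R (a k)) * ∏ k, W (a k) (y k) = ∏ k, q (y k) := by
    intro R hR y
    simp only [← Finset.prod_mul_distrib, ← hR, outDist]
    exact sum_prod_eq_prod_sum fun k x => R x * W x (y k)
  have hK : IsChannel fun (a : Fin N → X) (y : Fin N → Y) => ∏ k, W (a k) (y k) :=
    fun a => IsDist.pi fun k => hW (a k)
  obtain ⟨c, dec, hc⟩ := exists_two_use_code (IsDist.pi fun _ : Fin N => hP)
    (IsDist.pi fun _ : Fin N => hP') hK (hout hq) (hout hq') s hγ hM
  refine ⟨fun m => twoPhaseEnc s (c m), fun y => dec ((Fin.appendEquiv N N).symm y), ?_⟩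
  have hm : ∀ m, ∑ y : Fin (N + N) → Y,
      (∏ k : Fin (N + N), W (twoPhaseEnc s (c m) ((List.ofFn y).take (k : ℕ))) (y k)) *
        (if dec ((Fin.appendEquiv N N).symm y) = m then 0 else 1) ≤ _ := fun m => by
    refine le_trans (le_of_eq ?_) (hc m)
    rw [← (Fin.appendEquiv N N).sum_comp]
    refine Finset.sum_congr rfl fun y _ => ?_
    rw [Equiv.symm_apply_apply]
    congr 1
    exact prod_twoPhaseEnc W s (c m) y.1 y.2
  have hM' : (0 : ℝ) < M := by exact_mod_cast hM
  rw [errProb, inv_mul_le_iff₀ hM']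
  refine (Finset.sum_le_sum fun m _ => hm m).trans (le_of_eq ?_)
  rw [Finset.sum_const, Finset.card_univ, Fintype.card_fin, nsmul_eq_mul]

lemma sum_sum_eq_sum_words {A B : Type*} [Fintype A] [Fintype B] {N : ℕ}
    (F : (Fin N → A) → (Fin N → B) → ℝ) :
    ∑ w, ∑ z, F w z = ∑ e : Fin N → A × B, F (fun k => (e k).1) (fun k => (e k).2) := by
  rw [← Fintype.sum_prod_type', ← (Equiv.arrowProdEquivProdArrow (Fin N) (fun _ => A)
    (fun _ => B)).sum_comp]
  rfl

lemma prod_eq_prod_mul_exp_normSum {E : Type*} {N : ℕ} (hN : 0 < N) {g : E → ℝ} {C σ : ℝ}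
    {v q : E → ℝ} {e : Fin N → E} (h : ∀ k, v (e k) = q (e k) * Real.exp (C + σ * g (e k))) :
    ∏ k, v (e k) = (∏ k, q (e k)) * Real.exp (N * C + σ * Real.sqrt N * normSum g e) := by
  have hs : Real.sqrt N ≠ 0 := (Real.sqrt_pos.2 (by exact_mod_cast hN)).ne'
  rw [Finset.prod_congr rfl fun k _ => h k, Finset.prod_mul_distrib, ← Real.exp_sum]
  congr 2
  rw [Finset.sum_add_distrib, ← Finset.mul_sum, normSum, Finset.sum_const, Finset.card_univ,
    Fintype.card_fin, nsmul_eq_mul]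
  field_simp

lemma sum_likelihood_le_eq_wordCDF {W : X → Y → ℝ} {R : X → ℝ} {q : Y → ℝ} {g : X × Y → ℝ}
    {C σ : ℝ} (hσ : 0 < σ)
    (hR : ∀ x y, R x * W x y ≠ 0 → 0 < q y ∧ W x y = q y * Real.exp (C + σ * g (x, y)))
    {N : ℕ} (hN : 0 < N) {A B γ t : ℝ} (hA : 0 < A)
    (hB : γ * B = A * Real.exp (N * C + σ * Real.sqrt N * t)) :
    ∑ w : Fin N → X, (∏ k, R (w k)) * ∑ z : Fin N → Y, (∏ k, W (w k) (z k)) *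
        (if A * (∏ k, W (w k) (z k)) ≤ γ * (B * ∏ k, q (z k)) then 1 else 0) =
      wordCDF (fun e : X × Y => R e.1 * W e.1 e.2) g N t := by
  simp only [Finset.mul_sum]
  rw [sum_sum_eq_sum_words, wordCDF]
  refine Finset.sum_congr rfl fun e _ => ?_
  rw [Finset.prod_mul_distrib, mul_assoc]
  by_cases h0 : (∏ k, R (e k).1) * ∏ k, W (e k).1 (e k).2 = 0
  · rw [← mul_assoc, h0, ← mul_assoc (∏ k, R (e k).1), h0, zero_mul, zero_mul]
  have hk : ∀ k, R (e k).1 * W (e k).1 (e k).2 ≠ 0 := by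
    rw [← Finset.prod_mul_distrib, ← ne_eq, Finset.prod_ne_zero_iff] at h0
    exact fun k => h0 k (Finset.mem_univ k)
  have hW := prod_eq_prod_mul_exp_normSum hN (g := g) (v := fun e : X × Y => W e.1 e.2)
    (q := fun e => q e.2) (e := e) fun k => (hR _ _ (hk k)).2
  have hq : 0 < ∏ k, q (e k).2 := Finset.prod_pos fun k _ => (hR _ _ (hk k)).1
  have hs : 0 < σ * Real.sqrt N := mul_pos hσ (Real.sqrt_pos.2 (by exact_mod_cast hN))
  congr 2
  refine if_congr ?_ rfl rfl
  beta_reduce at hW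
  rw [hW, ← mul_assoc γ, hB, mul_comm (∏ k, q (e k).2), mul_assoc A, mul_le_mul_iff_right₀ hA,
    mul_le_mul_iff_left₀ hq, Real.exp_le_exp, add_le_add_iff_left, mul_le_mul_iff_right₀ hs]

/-- Error bound for the two-phase code in terms of normalised information densities. -/
lemma exists_code_errProb_le_switch {W : X → Y → ℝ} (hW : IsChannel W) {P P' : X → ℝ}
    (hP : IsDist P) (hP' : IsDist P') {q : Y → ℝ} (hq : outDist P W = q) (hq' : outDist P' W = q)
    {g g' : X × Y → ℝ} {C σ σ' : ℝ} (hσ : 0 < σ) (hσ' : 0 < σ')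
    (hg : ∀ x y, P x * W x y ≠ 0 → 0 < q y ∧ W x y = q y * Real.exp (C + σ * g (x, y)))
    (hg' : ∀ x y, P' x * W x y ≠ 0 → 0 < q y ∧ W x y = q y * Real.exp (C + σ' * g' (x, y)))
    (a : ℝ) {N : ℕ} (hN : 0 < N) {M : ℕ} (hM : 0 < M) :
    ∃ (enc : Fin M → List Y → X) (dec : (Fin (N + N) → Y) → Fin M),
      errProb W (N + N) M enc dec ≤
        ∑ e : Fin N → X × Y, (∏ k, P (e k).1 * W (e k).1 (e k).2) *
          (if a ≤ normSum g e then
            wordCDF (fun e : X × Y => P e.1 * W e.1 e.2) g N (a - normSum g e)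
          else
            wordCDF (fun e : X × Y => P' e.1 * W e.1 e.2) g' N (σ / σ' * (a - normSum g e))) +
        M / Real.exp (2 * N * C + σ * Real.sqrt N * a) := by
  obtain ⟨enc, dec, h⟩ := exists_twoPhase_code hW hP hP' hq hq'
    (fun (w : Fin N → X) y => a ≤ normSum g fun k => (w k, y k))
    (Real.exp_pos (2 * N * C + σ * Real.sqrt N * a)) hM
  refine ⟨enc, dec, h.trans (le_of_eq ?_)⟩
  congr 1
  rw [sum_sum_eq_sum_words]
  refine Finset.sum_congr rfl fun e _ => ?_
  rw [Finset.prod_mul_distrib]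
  by_cases h0 : (∏ k, P (e k).1) * ∏ k, W (e k).1 (e k).2 = 0
  · rw [h0, zero_mul, zero_mul]
  have hk : ∀ k, P (e k).1 * W (e k).1 (e k).2 ≠ 0 := by
    rw [← Finset.prod_mul_distrib, ← ne_eq, Finset.prod_ne_zero_iff] at h0
    exact fun k => h0 k (Finset.mem_univ k)
  have hWe := prod_eq_prod_mul_exp_normSum hN (g := g) (v := fun e : X × Y => W e.1 e.2)
    (q := fun e => q e.2) (e := e) fun k => (hg _ _ (hk k)).2
  have hqe : 0 < ∏ k, q (e k).2 := Finset.prod_pos fun k _ => (hg _ _ (hk k)).1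
  beta_reduce at hWe
  have hA : 0 < ∏ k, W (e k).1 (e k).2 := by
    rw [hWe]
    exact mul_pos hqe (Real.exp_pos _)
  congr 1
  refine if_congr Iff.rfl ?_ ?_
  · refine sum_likelihood_le_eq_wordCDF hσ hg hN hA ?_
    rw [hWe, mul_comm, mul_assoc (∏ k, q (e k).2), ← Real.exp_add]
    congr 2
    ring
  · refine sum_likelihood_le_eq_wordCDF hσ' hg' hN hA ?_
    rw [hWe, mul_comm, mul_assoc (∏ k, q (e k).2), ← Real.exp_add]
    congr 2
    field_simp
    ring

/-- Marginalising the last channel output of a feedback scheme. -/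
lemma sum_feedback_succ {X Y : Type*} [Fintype Y] {W : X → Y → ℝ} (hW : IsChannel W)
    (enc : List Y → X) {n : ℕ} (h : (Fin n → Y) → ℝ) :
    ∑ y : Fin (n + 1) → Y, (∏ k : Fin (n + 1), W (enc ((List.ofFn y).take (k : ℕ))) (y k)) *
        h (fun k => y k.castSucc) =
      ∑ y : Fin n → Y, (∏ k : Fin n, W (enc ((List.ofFn y).take (k : ℕ))) (y k)) * h y := by
  rw [← (Fin.snocEquiv fun _ => Y).sum_comp, Fintype.sum_prod_type, Finset.sum_comm]
  refine Finset.sum_congr rfl fun y _ => ?_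
  have hz : ∀ z : Y, (∏ k : Fin (n + 1), W (enc ((List.ofFn
      (Fin.snocEquiv (fun _ => Y) (z, y))).take (k : ℕ))) (Fin.snocEquiv (fun _ => Y) (z, y) k)) *
        h (fun k => Fin.snocEquiv (fun _ => Y) (z, y) k.castSucc) =
      ((∏ k : Fin n, W (enc ((List.ofFn y).take (k : ℕ))) (y k)) * h y) *
        W (enc (List.ofFn y)) z := by
    intro z
    have hsn : (Fin.snocEquiv (fun _ => Y) (z, y) : Fin (n + 1) → Y) = Fin.snoc y z := rfl
    have hlist : List.ofFn (Fin.snoc y z : Fin (n + 1) → Y) = List.ofFn y ++ [z] := by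
      rw [List.ofFn_succ_last]
      simp
    rw [hsn, Fin.prod_univ_castSucc, hlist]
    simp only [Fin.snoc_castSucc, Fin.snoc_last, Fin.val_castSucc, Fin.val_last]
    have ht : ∀ k ≤ n, (List.ofFn y ++ [z]).take k = (List.ofFn y).take k := fun k hk =>
      List.take_append_of_le_length (by simpa using hk)
    rw [ht n le_rfl, List.take_of_length_le (l := List.ofFn y) (by simp),
      Finset.prod_congr rfl fun (k : Fin n) _ => by rw [ht k k.2.le]]
    ring
  rw [Finset.sum_congr rfl fun z _ => hz z, ← Finset.mul_sum, (hW _).2, mul_one]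

lemma sum_feedback_eq_one {X Y : Type*} [Fintype Y] {W : X → Y → ℝ} (hW : IsChannel W)
    (enc : List Y → X) (n : ℕ) :
    ∑ y : Fin n → Y, ∏ k : Fin n, W (enc ((List.ofFn y).take (k : ℕ))) (y k) = 1 := by
  induction n with
  | zero => simp
  | succ n ih =>
    have h := sum_feedback_succ hW enc (n := n) fun _ => 1
    simp only [mul_one] at h
    rw [h, ih]

/-- Ignoring the last channel output. -/
lemma exists_code_succ {X Y : Type*} [Fintype Y] {W : X → Y → ℝ} (hW : IsChannel W) {n M : ℕ}
    (enc : Fin M → List Y → X) (dec : (Fin n → Y) → Fin M) :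
    ∃ dec' : (Fin (n + 1) → Y) → Fin M, errProb W (n + 1) M enc dec' = errProb W n M enc dec := by
  refine ⟨fun y => dec fun k => y k.castSucc, ?_⟩
  unfold errProb
  congr 1
  exact Finset.sum_congr rfl fun m _ =>
    sum_feedback_succ hW (enc m) fun y => if dec y = m then 0 else 1

lemma errProb_nonneg {X Y : Type*} [Fintype Y] {W : X → Y → ℝ} (hW : IsChannel W) {n M : ℕ}
    (enc : Fin M → List Y → X) (dec : (Fin n → Y) → Fin M) : 0 ≤ errProb W n M enc dec := by
  refine mul_nonneg (by positivity) (Finset.sum_nonneg fun m _ => Finset.sum_nonneg fun y _ =>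
    mul_nonneg (Finset.prod_nonneg fun k _ => (hW _).1 _) ?_)
  split_ifs <;> norm_num

/-- A crude converse bound by counting output words. -/
lemma one_sub_div_le_errProb {X Y : Type*} [Fintype Y] {W : X → Y → ℝ} (hW : IsChannel W)
    {n M : ℕ} (hM : 0 < M) (enc : Fin M → List Y → X) (dec : (Fin n → Y) → Fin M) :
    1 - Fintype.card (Fin n → Y) / M ≤ errProb W n M enc dec := by
  have hM' : (0 : ℝ) < M := by exact_mod_cast hM
  have hle : ∀ m : Fin M, ∀ y : Fin n → Y,
      ∏ k : Fin n, W (enc m ((List.ofFn y).take (k : ℕ))) (y k) ≤ 1 := by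
    refine fun m y => Finset.prod_le_one (fun k _ => (hW _).1 _) fun k _ => ?_
    rw [← (hW (enc m ((List.ofFn y).take (k : ℕ)))).2]
    exact Finset.single_le_sum (fun y _ => (hW _).1 y) (Finset.mem_univ (y k))
  have hterm : ∀ m : Fin M, 1 - ∑ y : Fin n → Y, (if dec y = m then (1 : ℝ) else 0) ≤
      ∑ y : Fin n → Y, (∏ k : Fin n, W (enc m ((List.ofFn y).take (k : ℕ))) (y k)) *
        (if dec y = m then 0 else 1) := by
    intro m
    refine (congrArg (· - _) (sum_feedback_eq_one hW (enc m) n)).ge.trans ?_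
    rw [← Finset.sum_sub_distrib]
    refine Finset.sum_le_sum fun y _ => ?_
    have := hle m y
    split_ifs <;> linarith
  have hsum := Finset.sum_le_sum fun m (_ : m ∈ Finset.univ) => hterm m
  rw [Finset.sum_sub_distrib, Finset.sum_comm] at hsum
  simp only [Finset.sum_ite_eq, Finset.mem_univ, if_true, Finset.sum_const, Finset.card_univ,
    Fintype.card_fin, nsmul_eq_mul, mul_one] at hsum
  rw [errProb, le_inv_mul_iff₀ hM', mul_sub, mul_one, mul_div_cancel₀ _ hM'.ne']
  exact hsum

/-- Relative entropy between distributions on a finite alphabet. -/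
def relEntropy (p q : Y → ℝ) : ℝ := ∑ y, p y * Real.log (p y / q y)

lemma relEntropy_self (q : Y → ℝ) : relEntropy q q = 0 := by
  refine Finset.sum_eq_zero fun y _ => ?_
  by_cases hy : q y = 0
  · rw [hy, zero_mul]
  · rw [div_self hy, Real.log_one, mul_zero]

lemma relEntropy_eq_sum_klFun {p q : Y → ℝ} (hp : IsDist p) (hq : IsDist q)
    (h : ∀ y, q y = 0 → p y = 0) :
    relEntropy p q = ∑ y, q y * InformationTheory.klFun (p y / q y) := by
  have hterm : ∀ y, q y * InformationTheory.klFun (p y / q y) =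
      p y * Real.log (p y / q y) + q y - p y := by
    intro y
    by_cases hy : q y = 0
    · simp [hy, h y hy]
    · rw [InformationTheory.klFun]
      field_simp
  simp only [hterm, Finset.sum_sub_distrib, Finset.sum_add_distrib, hp.2, hq.2, relEntropy]
  ring

lemma relEntropy_nonneg {p q : Y → ℝ} (hp : IsDist p) (hq : IsDist q)
    (h : ∀ y, q y = 0 → p y = 0) : 0 ≤ relEntropy p q := by
  rw [relEntropy_eq_sum_klFun hp hq h]
  exact Finset.sum_nonneg fun y _ => mul_nonneg (hq.1 y)
    (InformationTheory.klFun_nonneg (div_nonneg (hp.1 y) (hq.1 y)))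

lemma eq_of_relEntropy_nonpos {p q : Y → ℝ} (hp : IsDist p) (hq : IsDist q)
    (h : ∀ y, q y = 0 → p y = 0) (h0 : relEntropy p q ≤ 0) : p = q := by
  have hnn : ∀ y, 0 ≤ q y * InformationTheory.klFun (p y / q y) := fun y =>
    mul_nonneg (hq.1 y) (InformationTheory.klFun_nonneg (div_nonneg (hp.1 y) (hq.1 y)))
  rw [relEntropy_eq_sum_klFun hp hq h] at h0
  have h1 := (Finset.sum_eq_zero_iff_of_nonneg fun y _ => hnn y).1
    (le_antisymm h0 (Finset.sum_nonneg fun y _ => hnn y))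
  funext y
  rcases mul_eq_zero.1 (h1 y (Finset.mem_univ y)) with hy | hy
  · rw [hy, h y hy]
  · rw [InformationTheory.klFun_eq_zero_iff (div_nonneg (hp.1 y) (hq.1 y))] at hy
    exact eq_of_div_eq_one hy

lemma relEntropy_le_sum_sq_div {p q : Y → ℝ} (hp : IsDist p) (hq : IsDist q)
    (h : ∀ y, q y = 0 → p y = 0) : relEntropy p q ≤ ∑ y, (p y - q y) ^ 2 / q y := by
  have hterm : ∀ y, p y * Real.log (p y / q y) ≤ (p y - q y) ^ 2 / q y + p y - q y := by
    intro y
    by_cases hy : q y = 0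
    · simp [hy, h y hy]
    · have hq0 : 0 < q y := lt_of_le_of_ne (hq.1 y) (Ne.symm hy)
      rcases (hp.1 y).eq_or_lt with hp0 | hp0
      · rw [← hp0]
        field_simp
        simp
      · calc p y * Real.log (p y / q y) ≤ p y * (p y / q y - 1) :=
              mul_le_mul_of_nonneg_left (Real.log_le_sub_one_of_pos (div_pos hp0 hq0)) hp0.le
          _ = (p y - q y) ^ 2 / q y + p y - q y := by field_simp; ring
  refine (Finset.sum_le_sum fun y _ => hterm y).trans (le_of_eq ?_)
  rw [Finset.sum_sub_distrib, Finset.sum_add_distrib, hp.2, hq.2]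
  ring

lemma IsDist.outDist {P : X → ℝ} (hP : IsDist P) {W : X → Y → ℝ} (hW : IsChannel W) :
    IsDist (outDist P W) := by
  refine ⟨fun y => Finset.sum_nonneg fun x _ => mul_nonneg (hP.1 x) ((hW x).1 y), ?_⟩
  unfold Paper.outDist
  rw [Finset.sum_comm]
  simp only [← Finset.mul_sum, (hW _).2, mul_one, hP.2]

lemma mul_le_outDist {P : X → ℝ} (hP : IsDist P) {W : X → Y → ℝ} (hW : IsChannel W) (x : X)
    (y : Y) : P x * W x y ≤ outDist P W y :=
  Finset.single_le_sum (f := fun x => P x * W x y)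
    (fun x _ => mul_nonneg (hP.1 x) ((hW x).1 y)) (Finset.mem_univ x)

/-- The compensation identity for mutual information. -/
lemma sum_mul_relEntropy {P : X → ℝ} (hP : IsDist P) {W : X → Y → ℝ} (hW : IsChannel W)
    {q : Y → ℝ} (hq : ∀ y, q y = 0 → outDist P W y = 0) :
    ∑ x, P x * relEntropy (W x) q = mutInfo P W + relEntropy (outDist P W) q := by
  have h1 : relEntropy (outDist P W) q =
      ∑ x, ∑ y, P x * W x y * Real.log (outDist P W y / q y) := by
    rw [Finset.sum_comm]
    exact Finset.sum_congr rfl fun y _ => by rw [← Finset.sum_mul, outDist]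
  rw [h1, mutInfo, ← Finset.sum_add_distrib]
  refine Finset.sum_congr rfl fun x _ => ?_
  rw [relEntropy, Finset.mul_sum, ← Finset.sum_add_distrib]
  refine Finset.sum_congr rfl fun y _ => ?_
  rw [← mul_assoc, ← mul_add]
  by_cases h0 : P x * W x y = 0
  · rw [h0, zero_mul, zero_mul]
  · have hpos : 0 < P x * W x y :=
      lt_of_le_of_ne (mul_nonneg (hP.1 x) ((hW x).1 y)) (Ne.symm h0)
    have hout : outDist P W y ≠ 0 := (hpos.trans_le (mul_le_outDist hP hW x y)).ne'
    have hqy : q y ≠ 0 := fun h => hout (hq y h)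
    have hWy : W x y ≠ 0 := right_ne_zero_of_mul h0
    rw [Real.log_div hWy hqy, Real.log_div hWy hout, Real.log_div hout hqy]
    ring

lemma mutInfo_le_capacity {P : X → ℝ} (hP : IsDist P) {W : X → Y → ℝ} (hW : IsChannel W) :
    mutInfo P W ≤ capacity W := by
  refine le_csSup ⟨∑ _x : X, ∑ _y : Y, 1, ?_⟩ ⟨P, hP, rfl⟩
  rintro _ ⟨R, hR, rfl⟩
  refine Finset.sum_le_sum fun x _ => Finset.sum_le_sum fun y _ => ?_
  by_cases h0 : R x * W x y = 0
  · rw [h0, zero_mul]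
    exact zero_le_one
  · have hpos : 0 < R x * W x y :=
      lt_of_le_of_ne (mul_nonneg (hR.1 x) ((hW x).1 y)) (Ne.symm h0)
    have hle := mul_le_outDist hR hW x y
    have hout := hpos.trans_le hle
    have hWy : 0 < W x y := lt_of_le_of_ne ((hW x).1 y) (Ne.symm (right_ne_zero_of_mul h0))
    have hW1 : W x y ≤ 1 := by
      rw [← (hW x).2]
      exact Finset.single_le_sum (fun y _ => (hW x).1 y) (Finset.mem_univ y)
    calc R x * W x y * Real.log (W x y / outDist R W y)
        ≤ R x * W x y * (W x y / outDist R W y) := by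
          refine mul_le_mul_of_nonneg_left ?_ hpos.le
          linarith [Real.log_le_sub_one_of_pos (div_pos hWy hout)]
      _ = W x y * (R x * W x y / outDist R W y) := by ring
      _ ≤ 1 * 1 := mul_le_mul hW1 ((div_le_one hout).2 hle) (div_nonneg hpos.le hout.le) zero_le_one
      _ = 1 := one_mul 1

lemma outDist_mix {X Y : Type*} [Fintype X] (P R : X → ℝ) (W : X → Y → ℝ) (a b : ℝ) :
    outDist (fun x => a * P x + b * R x) W = fun y => a * outDist P W y + b * outDist R W y := by
  funext y
  simp only [outDist, add_mul, Finset.sum_add_distrib, Finset.mul_sum, mul_assoc]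

lemma IsDist.mix {P R : X → ℝ} (hP : IsDist P) (hR : IsDist R) {a b : ℝ} (ha : 0 ≤ a)
    (hb : 0 ≤ b) (hab : a + b = 1) : IsDist fun x => a * P x + b * R x :=
  ⟨fun x => add_nonneg (mul_nonneg ha (hP.1 x)) (mul_nonneg hb (hR.1 x)), by
    rw [Finset.sum_add_distrib, ← Finset.mul_sum, ← Finset.mul_sum, hP.2, hR.2, mul_one, mul_one,
      hab]⟩

lemma outDist_eq_of_mem_capacityAchievers {W : X → Y → ℝ} (hW : IsChannel W) {P R : X → ℝ}
    (hP : P ∈ capacityAchievers W) (hR : R ∈ capacityAchievers W) :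
    outDist P W = outDist R W := by
  have hhalf : (0 : ℝ) ≤ 1 / 2 := by norm_num
  have hmix := hP.1.mix hR.1 hhalf hhalf (by norm_num)
  have hPo := hP.1.outDist hW
  have hRo := hR.1.outDist hW
  have hmo := hmix.outDist hW
  set q := outDist (fun x => 1 / 2 * P x + 1 / 2 * R x) W with hq
  have hqy : ∀ y, q y = 1 / 2 * outDist P W y + 1 / 2 * outDist R W y := fun y => by
    rw [hq, outDist_mix]
  have hPq : ∀ y, q y = 0 → outDist P W y = 0 := fun y hy => by
    have := hPo.1 y; have := hRo.1 y; have := hqy y; linarith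
  have hRq : ∀ y, q y = 0 → outDist R W y = 0 := fun y hy => by
    have := hPo.1 y; have := hRo.1 y; have := hqy y; linarith
  have h1 := sum_mul_relEntropy hP.1 hW hPq
  have h2 := sum_mul_relEntropy hR.1 hW hRq
  have h3 := sum_mul_relEntropy hmix hW (q := q) fun y hy => hy
  have h4 := relEntropy_self q
  have h5 : ∑ x, (1 / 2 * P x + 1 / 2 * R x) * relEntropy (W x) q =
      1 / 2 * ∑ x, P x * relEntropy (W x) q + 1 / 2 * ∑ x, R x * relEntropy (W x) q := by
    simp only [add_mul, Finset.sum_add_distrib, Finset.mul_sum, mul_assoc]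
  have h6 := mutInfo_le_capacity hmix hW
  have h7 := relEntropy_nonneg hPo hmo hPq
  have h8 := relEntropy_nonneg hRo hmo hRq
  have h9 : mutInfo P W = capacity W := hP.2
  have h10 : mutInfo R W = capacity W := hR.2
  rw [← hq, h4] at h3
  rw [eq_of_relEntropy_nonpos hPo hmo hPq (by linarith),
    eq_of_relEntropy_nonpos hRo hmo hRq (by linarith)]

lemma outDist_eq_qStar {W : X → Y → ℝ} (hW : IsChannel W) {P : X → ℝ}
    (hP : P ∈ capacityAchievers W) : outDist P W = qStar W := by
  have h : (capacityAchievers W).Nonempty := ⟨P, hP⟩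
  rw [qStar, dif_pos h]
  exact outDist_eq_of_mem_capacityAchievers hW hP h.choose_spec

lemma sum_mul_relEntropy_qStar {W : X → Y → ℝ} (hW : IsChannel W) {P : X → ℝ}
    (hP : P ∈ capacityAchievers W) : ∑ x, P x * relEntropy (W x) (qStar W) = capacity W := by
  rw [sum_mul_relEntropy hP.1 hW fun y hy => by rw [outDist_eq_qStar hW hP, hy],
    outDist_eq_qStar hW hP, relEntropy_self, add_zero]
  exact hP.2

lemma relEntropy_qStar_le {W : X → Y → ℝ} (hW : IsChannel W) {P : X → ℝ}
    (hP : P ∈ capacityAchievers W) {x : X} (hx : P x ≠ 0) :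
    relEntropy (W x) (qStar W) ≤ capacity W := by
  have hq : IsDist (qStar W) := outDist_eq_qStar hW hP ▸ hP.1.outDist hW
  have hxpos : 0 < P x := lt_of_le_of_ne (hP.1.1 x) (Ne.symm hx)
  have hR : IsDist fun z => if z = x then (1 : ℝ) else 0 :=
    ⟨fun z => by beta_reduce; split_ifs <;> norm_num, by simp⟩
  have hRout : ∀ y, outDist (fun z => if z = x then (1 : ℝ) else 0) W y = W x y := fun y => by
    simp [outDist]
  have hsupp : ∀ y, qStar W y = 0 → W x y = 0 := by
    intro y hy
    have h1 := mul_le_outDist hP.1 hW x y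
    rw [outDist_eq_qStar hW hP, hy] at h1
    have h2 := (hW x).1 y
    nlinarith
  set χ := ∑ y, (W x y - qStar W y) ^ 2 / qStar W y with hχ
  have key : ∀ t : ℝ, 0 < t → t ≤ 1 → relEntropy (W x) (qStar W) - capacity W ≤ t * χ := by
    intro t ht0 ht1
    have hmix := hP.1.mix hR (sub_nonneg.2 ht1) ht0.le (by ring)
    have hmo := hmix.outDist hW
    have hout : ∀ y, outDist (fun z => (1 - t) * P z + t * (if z = x then (1 : ℝ) else 0)) W y =
        (1 - t) * qStar W y + t * W x y := fun y => by
      rw [outDist_mix, outDist_eq_qStar hW hP]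
      beta_reduce
      rw [hRout]
    have hac : ∀ y, qStar W y = 0 →
        outDist (fun z => (1 - t) * P z + t * (if z = x then (1 : ℝ) else 0)) W y = 0 :=
      fun y hy => by rw [hout, hy, hsupp y hy, mul_zero, mul_zero, add_zero]
    have h1 := sum_mul_relEntropy hmix hW hac
    have h2 := relEntropy_le_sum_sq_div hmo hq hac
    have h3 : ∑ y, (outDist (fun z => (1 - t) * P z + t * (if z = x then (1 : ℝ) else 0)) W y -
        qStar W y) ^ 2 / qStar W y = t * (t * χ) := by
      rw [hχ, Finset.mul_sum, Finset.mul_sum]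
      refine Finset.sum_congr rfl fun y _ => ?_
      rw [hout]
      ring
    have h4 : ∑ z, ((1 - t) * P z + t * (if z = x then (1 : ℝ) else 0)) *
        relEntropy (W z) (qStar W) = (1 - t) * capacity W + t * relEntropy (W x) (qStar W) := by
      simp only [add_mul, Finset.sum_add_distrib, mul_assoc, ← Finset.mul_sum,
        sum_mul_relEntropy_qStar hW hP]
      simp
    have h5 := mutInfo_le_capacity hmix hW
    refine le_of_mul_le_mul_left ?_ ht0
    rw [h3] at h2
    linarith
  refine sub_nonpos.1 (ge_of_tendsto (x := nhdsWithin 0 (Set.Ioi (0 : ℝ)))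
    (f := fun t : ℝ => t * χ) ?_ ?_)
  · have : Tendsto (fun t : ℝ => t * χ) (nhds 0) (nhds (0 * χ)) :=
      tendsto_id.mul_const χ
    rw [zero_mul] at this
    exact this.mono_left nhdsWithin_le_nhds
  · filter_upwards [Ioc_mem_nhdsGT (zero_lt_one (α := ℝ))] with t ht
    exact key t ht.1 ht.2

/-- The Kuhn–Tucker condition on the support of a capacity-achieving input distribution. -/
lemma relEntropy_qStar_eq {W : X → Y → ℝ} (hW : IsChannel W) {P : X → ℝ}
    (hP : P ∈ capacityAchievers W) {x : X} (hx : P x ≠ 0) :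
    relEntropy (W x) (qStar W) = capacity W := by
  have hnn : ∀ z ∈ Finset.univ, 0 ≤ P z * (capacity W - relEntropy (W z) (qStar W)) := by
    intro z _
    by_cases hz : P z = 0
    · rw [hz, zero_mul]
    · exact mul_nonneg (hP.1.1 z) (sub_nonneg.2 (relEntropy_qStar_le hW hP hz))
  have hsum : ∑ z, P z * (capacity W - relEntropy (W z) (qStar W)) = 0 := by
    simp only [mul_sub, Finset.sum_sub_distrib, sum_mul_relEntropy_qStar hW hP, ← Finset.sum_mul,
      hP.1.2]
    ring
  have h := (Finset.sum_eq_zero_iff_of_nonneg hnn).1 hsum x (Finset.mem_univ x)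
  rcases mul_eq_zero.1 h with h | h
  · exact absurd h hx
  · linarith

lemma isCompact_capacityAchievers {W : X → Y → ℝ} (hW : IsChannel W) :
    IsCompact (capacityAchievers W) := by
  rcases (capacityAchievers W).eq_empty_or_nonempty with h | ⟨P, hP⟩
  · rw [h]
    exact isCompact_empty
  have heq : capacityAchievers W = stdSimplex ℝ X ∩
      {R | outDist R W = qStar W ∧ ∑ x, R x * relEntropy (W x) (qStar W) = capacity W} := by
    ext R
    refine ⟨fun hR => ⟨hR.1, outDist_eq_qStar hW hR, sum_mul_relEntropy_qStar hW hR⟩, ?_⟩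
    rintro ⟨hR, hout, hsum⟩
    have hR' : IsDist R := hR
    refine ⟨hR', ?_⟩
    have h1 := sum_mul_relEntropy_qStar hW hP
    have h2 := sum_mul_relEntropy hR' hW (q := qStar W) fun y hy => by rw [hout, hy]
    rw [hout, relEntropy_self, hsum, add_zero] at h2
    exact h2.symm
  rw [heq]
  refine (isCompact_stdSimplex ℝ X).inter_right (IsClosed.inter ?_ ?_)
  · refine isClosed_eq (continuous_pi fun y => ?_) continuous_const
    unfold outDist
    fun_prop
  · exact isClosed_eq (by fun_prop) continuous_const

lemma exists_mem_capacityAchievers_Vmin_Vmax {W : X → Y → ℝ} (hW : IsChannel W)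
    (hV : 0 < Vmin W) :
    ∃ P ∈ capacityAchievers W, ∃ P' ∈ capacityAchievers W,
      ∑ x, P x * nu W x = Vmin W ∧ ∑ x, P' x * nu W x = Vmax W ∧ Vmin W ≤ Vmax W := by
  have himg : {v | ∃ P ∈ capacityAchievers W, v = ∑ x, P x * nu W x} =
      (fun P : X → ℝ => ∑ x, P x * nu W x) '' capacityAchievers W := by
    ext v
    exact ⟨fun ⟨P, hP, h⟩ => ⟨P, hP, h.symm⟩, fun ⟨P, hP, h⟩ => ⟨P, hP, h.symm⟩⟩
  have hne : (capacityAchievers W).Nonempty := by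
    by_contra h
    rw [Set.not_nonempty_iff_eq_empty] at h
    rw [Vmin, himg, h, Set.image_empty, Real.sInf_empty] at hV
    exact lt_irrefl _ hV
  have hc := isCompact_capacityAchievers hW
  have hcont : ContinuousOn (fun P : X → ℝ => ∑ x, P x * nu W x) (capacityAchievers W) := by
    fun_prop
  obtain ⟨P, hP, hPe⟩ := hc.exists_sInf_image_eq hne hcont
  obtain ⟨P', hP', hPe'⟩ := hc.exists_sSup_image_eq hne hcont
  refine ⟨P, hP, P', hP', ?_, ?_, ?_⟩
  · rw [Vmin, himg, hPe]
  · rw [Vmax, himg, hPe']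
  · rw [Vmin, Vmax, himg]
    exact csInf_le_csSup (hne.image _) (hc.image_of_continuousOn hcont).bddBelow
      (hc.image_of_continuousOn hcont).bddAbove

/-- The centred and normalised information density. -/
def normDensity (W : X → Y → ℝ) (V : ℝ) (e : X × Y) : ℝ :=
  (iStar W e.1 e.2 - capacity W) / Real.sqrt V

lemma isDist_joint {P : X → ℝ} (hP : IsDist P) {W : X → Y → ℝ} (hW : IsChannel W) :
    IsDist fun e : X × Y => P e.1 * W e.1 e.2 := by
  refine ⟨fun e => mul_nonneg (hP.1 _) ((hW _).1 _), ?_⟩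
  rw [Fintype.sum_prod_type]
  simp only [← Finset.mul_sum, (hW _).2, mul_one, hP.2]

lemma sum_joint_mul_normDensity {W : X → Y → ℝ} (hW : IsChannel W) {P : X → ℝ}
    (hP : P ∈ capacityAchievers W) (V : ℝ) :
    ∑ e : X × Y, P e.1 * W e.1 e.2 * normDensity W V e = 0 := by
  rw [Fintype.sum_prod_type]
  refine Finset.sum_eq_zero fun x _ => ?_
  by_cases hx : P x = 0
  · simp [hx]
  have h := relEntropy_qStar_eq hW hP hx
  have h2 : ∀ y, P x * W x y * normDensity W V (x, y) =
      P x / Real.sqrt V * (W x y * Real.log (W x y / qStar W y) - W x y * capacity W) := fun y => by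
    rw [normDensity, iStar]
    ring
  simp only [h2]
  rw [← Finset.mul_sum, Finset.sum_sub_distrib, ← Finset.sum_mul, (hW x).2, one_mul]
  rw [relEntropy] at h
  rw [h, sub_self, mul_zero]

lemma sum_joint_mul_normDensity_sq {W : X → Y → ℝ} (hW : IsChannel W) {P : X → ℝ}
    (hP : P ∈ capacityAchievers W) {V : ℝ} (hV : 0 < V) (hPV : ∑ x, P x * nu W x = V) :
    ∑ e : X × Y, P e.1 * W e.1 e.2 * normDensity W V e ^ 2 = 1 := by
  rw [Fintype.sum_prod_type]
  have hx : ∀ x, ∑ y, P x * W x y * normDensity W V (x, y) ^ 2 = P x * nu W x / V := by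
    intro x
    by_cases hx : P x = 0
    · simp [hx]
    have h : ∑ y, W x y * iStar W x y = capacity W := relEntropy_qStar_eq hW hP hx
    have h2 : ∀ y, P x * W x y * normDensity W V (x, y) ^ 2 =
        P x / V * (W x y * iStar W x y ^ 2 - 2 * capacity W * (W x y * iStar W x y) +
          capacity W ^ 2 * W x y) := fun y => by
      rw [normDensity, div_pow, Real.sq_sqrt hV.le]
      ring
    simp only [h2]
    rw [← Finset.mul_sum, Finset.sum_add_distrib, Finset.sum_sub_distrib, ← Finset.mul_sum,
      ← Finset.mul_sum, (hW x).2, h, nu, h]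
    ring
  simp only [hx]
  rw [← Finset.sum_div, hPV, div_self hV.ne']

lemma eq_qStar_mul_exp_normDensity {W : X → Y → ℝ} (hW : IsChannel W) {P : X → ℝ}
    (hP : P ∈ capacityAchievers W) {V : ℝ} (hV : 0 < V) (x : X) (y : Y) (h : P x * W x y ≠ 0) :
    0 < qStar W y ∧ W x y =
      qStar W y * Real.exp (capacity W + Real.sqrt V * normDensity W V (x, y)) := by
  have hpos : 0 < P x * W x y :=
    lt_of_le_of_ne (mul_nonneg (hP.1.1 x) ((hW x).1 y)) (Ne.symm h)
  have hq : 0 < qStar W y := by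
    rw [← outDist_eq_qStar hW hP]
    exact hpos.trans_le (mul_le_outDist hP.1 hW x y)
  have hWy : 0 < W x y := lt_of_le_of_ne ((hW x).1 y) (Ne.symm (right_ne_zero_of_mul h))
  have hs := (Real.sqrt_pos.2 hV).ne'
  refine ⟨hq, ?_⟩
  have he : capacity W + Real.sqrt V * normDensity W V (x, y) =
      Real.log (W x y / qStar W y) := by
    rw [normDensity, iStar]
    field_simp
    ring
  rw [he, Real.exp_log (div_pos hWy hq), mul_div_cancel₀ _ hq.ne']

lemma gcdf_neg_gap {ε β : ℝ} (hε0 : 0 < ε) (hε1 : ε < 1 / 2) (hβ : β < 1) :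
    ∃ u, u < 0 ∧ ε < gcdf u ∧ gcdf u - ε -
      (1 - β) * gpdf (2 * Real.sqrt 2 * u) *
        ((Real.sqrt (2 * Real.pi))⁻¹ - gpdf (Real.sqrt 2 * u)) < 0 := by
  have hu0 : gcdf (gcdfInv ε) = ε := gcdf_gcdfInv hε0 (by linarith)
  have hneg : gcdfInv ε < 0 := by
    rw [← strictMono_gcdf.lt_iff_lt, hu0, gcdf_zero]
    exact hε1
  have hcont : Continuous fun u => gcdf u - ε - (1 - β) * gpdf (2 * Real.sqrt 2 * u) *
      ((Real.sqrt (2 * Real.pi))⁻¹ - gpdf (Real.sqrt 2 * u)) := by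
    have := continuous_gcdf
    have := continuous_gpdf
    fun_prop
  have hlt : gpdf (Real.sqrt 2 * gcdfInv ε) < (Real.sqrt (2 * Real.pi))⁻¹ := by
    rw [gpdf]
    refine mul_lt_of_lt_one_right (by positivity) ?_
    rw [Real.exp_lt_one_iff]
    have : 0 < (Real.sqrt 2 * gcdfInv ε) ^ 2 := by
      have : Real.sqrt 2 * gcdfInv ε ≠ 0 := mul_ne_zero (by positivity) hneg.ne
      positivity
    linarith
  have hval : gcdf (gcdfInv ε) - ε - (1 - β) * gpdf (2 * Real.sqrt 2 * gcdfInv ε) *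
      ((Real.sqrt (2 * Real.pi))⁻¹ - gpdf (Real.sqrt 2 * gcdfInv ε)) < 0 := by
    rw [hu0, sub_self, zero_sub, neg_lt_zero]
    exact mul_pos (mul_pos (sub_pos.2 hβ) (gpdf_pos _)) (sub_pos.2 hlt)
  have hev := (hcont.tendsto (gcdfInv ε)).eventually (gt_mem_nhds hval)
  obtain ⟨u, hu, hu1, hu2⟩ := ((hev.filter_mono nhdsWithin_le_nhds).and
    (Ioo_mem_nhdsGT hneg)).exists
  refine ⟨u, hu2, ?_, hu⟩
  rw [← hu0]
  exact strictMono_gcdf hu1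

lemma le_liminf_of_forall_sub_le {v : ℕ → ℝ} {r : ℝ} (hr : r ≤ 0)
    (h : ∀ δ > 0, ∀ᶠ n in atTop, r - δ ≤ v n) : r ≤ liminf v atTop := by
  rw [Filter.liminf_eq]
  by_cases hb : BddAbove {a | ∀ᶠ n in atTop, a ≤ v n}
  · exact le_of_forall_sub_le fun δ hδ => le_csSup hb (h δ hδ)
  · rwa [Real.sSup_of_not_bddAbove hb]

lemma le_Mfb {X Y : Type*} [Fintype Y] {W : X → Y → ℝ} (hW : IsChannel W) [Nonempty X]
    {n : ℕ} {ε R : ℝ} (hε : ε < 1)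
    {enc : Fin ⌈Real.exp (n * R)⌉₊ → List Y → X}
    {dec : (Fin n → Y) → Fin ⌈Real.exp (n * R)⌉₊} (h : errProb W n _ enc dec ≤ ε) :
    (⌈Real.exp (n * R)⌉₊ : ℝ) ≤ Mfb W n ε := by
  refine le_csSup ⟨Fintype.card (Fin n → Y) / (1 - ε), ?_⟩
    ⟨R, rfl, le_trans (csInf_le ⟨0, ?_⟩ ⟨enc, dec, rfl⟩) h⟩
  · rintro _ ⟨S, rfl, hS⟩
    have hM : 0 < ⌈Real.exp (n * S)⌉₊ := Nat.ceil_pos.2 (Real.exp_pos _)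
    have hM' : (0 : ℝ) < (⌈Real.exp (n * S)⌉₊ : ℝ) := by exact_mod_cast hM
    have h1 : 1 - Fintype.card (Fin n → Y) / (⌈Real.exp (n * S)⌉₊ : ℝ) ≤ ε := by
      refine le_trans (le_csInf ?_ ?_) hS
      · exact ⟨_, fun _ _ => Classical.arbitrary X, fun _ => ⟨0, hM⟩, rfl⟩
      · rintro _ ⟨enc, dec, rfl⟩
        exact one_sub_div_le_errProb hW hM enc dec
    rw [le_div_iff₀ (by linarith)]
    have h2 : 1 - ε ≤ Fintype.card (Fin n → Y) / (⌈Real.exp (n * S)⌉₊ : ℝ) := by linarith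
    rw [le_div_iff₀ hM'] at h2
    linarith
  · rintro _ ⟨enc, dec, rfl⟩
    exact errProb_nonneg hW enc dec

lemma eventually_exists_code {W : X → Y → ℝ} (hW : IsChannel W) (hV : 0 < Vmin W) {ε u : ℝ}
    (hu : u < 0)
    (hgap : gcdf u - (1 - Real.sqrt (Vmin W / Vmax W)) * gpdf (2 * Real.sqrt 2 * u) *
      ((Real.sqrt (2 * Real.pi))⁻¹ - gpdf (Real.sqrt 2 * u)) < ε) {δ : ℝ} (hδ : 0 < δ) :
    ∀ᶠ n : ℕ in atTop, ∀ M : ℕ, 0 < M →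
      (M : ℝ) ≤ 2 * Real.exp (n * capacity W + Real.sqrt n * (Real.sqrt (Vmin W) * u - δ)) →
      ∃ (enc : Fin M → List Y → X) (dec : (Fin n → Y) → Fin M), errProb W n M enc dec ≤ ε := by
  obtain ⟨P, hP, P', hP', hPV, hPV', hle⟩ := exists_mem_capacityAchievers_Vmin_Vmax hW hV
  set σ := Real.sqrt (Vmin W) with hσ
  set C := capacity W with hC
  have hσ0 : 0 < σ := Real.sqrt_pos.2 hV
  have hV' := hV.trans_le hle
  have hσ1 : 0 < Real.sqrt (Vmax W) := Real.sqrt_pos.2 hV'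
  rw [Real.sqrt_div hV.le, ← hσ] at hgap
  set β := σ / Real.sqrt (Vmax W) with hβ
  have hβ0 : 0 ≤ β := (div_pos hσ0 hσ1).le
  have hβ1 : β ≤ 1 := (div_le_one hσ1).2 (Real.sqrt_le_sqrt hle)
  have h_integral := integral_switchErr_le hβ0 hβ1 hu
  set η := (ε - (gcdf u - (1 - β) * gpdf (2 * Real.sqrt 2 * u) *
      ((Real.sqrt (2 * Real.pi))⁻¹ - gpdf (Real.sqrt 2 * u)))) / 2 with hη
  have hη0 : 0 < η := by linarith
  have hsw := eventually_sum_switch_le (isDist_joint hP.1 hW)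
    (sum_joint_mul_normDensity hW hP (Vmin W)) (sum_joint_mul_normDensity_sq hW hP hV hPV)
    (isDist_joint hP'.1 hW)
    (sum_joint_mul_normDensity hW hP' (Vmax W)) (sum_joint_mul_normDensity_sq hW hP' hV' hPV')
    β (Real.sqrt 2 * u) hη0
  have hexp : ∀ᶠ N : ℕ in atTop, 2 * Real.exp (|C| - Real.sqrt N * δ) ≤ η := by
    have h1 : Tendsto (fun N : ℕ => Real.sqrt N * δ) atTop atTop :=
      (Real.tendsto_sqrt_atTop.comp tendsto_natCast_atTop_atTop).atTop_mul_const hδ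
    have h2 : Tendsto (fun N : ℕ => |C| - Real.sqrt N * δ) atTop atBot := by
      simp only [sub_eq_add_neg]
      exact tendsto_atBot_add_const_left _ _ (tendsto_neg_atTop_atBot.comp h1)
    have h3 := (Real.tendsto_exp_atBot.comp h2).const_mul 2
    rw [mul_zero] at h3
    exact (h3.eventually (gt_mem_nhds hη0)).mono fun N h => h.le
  have hhalf : Tendsto (fun n : ℕ => n / 2) atTop atTop :=
    Nat.tendsto_div_const_atTop (by norm_num)
  filter_upwards [hhalf.eventually hsw, hhalf.eventually hexp,
    hhalf.eventually (eventually_gt_atTop 0)] with n hn1 hn2 hN M hM hMle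
  obtain ⟨enc, dec, hcode⟩ := exists_code_errProb_le_switch hW hP.1 hP'.1
    (outDist_eq_qStar hW hP) (outDist_eq_qStar hW hP') hσ0 hσ1
    (eq_qStar_mul_exp_normDensity hW hP hV) (eq_qStar_mul_exp_normDensity hW hP' hV')
    (Real.sqrt 2 * u) hN hM
  have hMγ : M / Real.exp (2 * (n / 2 : ℕ) * capacity W +
      σ * Real.sqrt (n / 2 : ℕ) * (Real.sqrt 2 * u)) ≤ η := by
    refine le_trans ?_ hn2
    rw [div_le_iff₀ (Real.exp_pos _), mul_assoc, ← Real.exp_add]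
    refine hMle.trans (mul_le_mul_of_nonneg_left (Real.exp_le_exp.2 ?_) zero_le_two)
    have hnle : (2 * (n / 2 : ℕ) : ℝ) ≤ n := by exact_mod_cast Nat.mul_div_le n 2
    have hnge : (n : ℝ) ≤ 2 * (n / 2 : ℕ) + 1 := by
      have : n ≤ 2 * (n / 2) + 1 := by omega
      exact_mod_cast this
    have h1 : n * C ≤ 2 * (n / 2 : ℕ) * C + |C| := by
      have := le_abs_self C
      have := neg_abs_le C
      have := abs_nonneg C
      nlinarith
    have h2 : Real.sqrt 2 * Real.sqrt (n / 2 : ℕ) ≤ Real.sqrt n := by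
      rw [← Real.sqrt_mul zero_le_two]
      exact Real.sqrt_le_sqrt hnle
    have h3 : Real.sqrt (n / 2 : ℕ) ≤ Real.sqrt n := by
      refine Real.sqrt_le_sqrt ?_
      have : (0 : ℝ) ≤ (n / 2 : ℕ) := Nat.cast_nonneg _
      linarith
    have h4 : σ * u < 0 := mul_neg_of_pos_of_neg hσ0 hu
    have h5 : Real.sqrt n * (σ * u) ≤ Real.sqrt 2 * Real.sqrt (n / 2 : ℕ) * (σ * u) :=
      mul_le_mul_of_nonpos_right h2 h4.le
    have h6 : Real.sqrt (n / 2 : ℕ) * δ ≤ Real.sqrt n * δ := mul_le_mul_of_nonneg_right h3 hδ.le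
    rw [← hC]
    linarith
  have hfin : errProb W (n / 2 + n / 2) M enc dec ≤ ε := by
    refine hcode.trans ?_
    linarith
  rcases Nat.even_or_odd' n with ⟨k, hk | hk⟩
  · have hn : n / 2 + n / 2 = n := by omega
    rw [← hn]
    exact ⟨enc, dec, hfin⟩
  · have hn : n / 2 + n / 2 + 1 = n := by omega
    obtain ⟨dec', hdec'⟩ := exists_code_succ hW enc dec
    rw [← hn]
    exact ⟨enc, dec', hdec'.trans_le hfin⟩

lemma eventually_sub_le_SOfb {W : X → Y → ℝ} (hW : IsChannel W) (hV : 0 < Vmin W) {ε u : ℝ}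
    (hε0 : 0 ≤ ε) (hε1 : ε < 1) (hu : u < 0)
    (hgap : gcdf u - (1 - Real.sqrt (Vmin W / Vmax W)) * gpdf (2 * Real.sqrt 2 * u) *
      ((Real.sqrt (2 * Real.pi))⁻¹ - gpdf (Real.sqrt 2 * u)) < ε) {δ : ℝ} (hδ : 0 < δ) :
    ∀ᶠ n : ℕ in atTop, Real.sqrt (Vmin W) * u - δ ≤ SOfb W ε n := by
  have hX : Nonempty X := by
    obtain ⟨P, hP, -⟩ := exists_mem_capacityAchievers_Vmin_Vmax hW hV
    by_contra h
    rw [not_nonempty_iff] at h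
    have := hP.1.2
    simp at this
  filter_upwards [eventually_exists_code hW hV hu hgap hδ, eventually_gt_atTop 0] with n hcode hn
  set r := Real.sqrt (Vmin W) * u - δ with hr
  have hs : 0 < Real.sqrt n := Real.sqrt_pos.2 (by exact_mod_cast hn)
  set R := capacity W + r / Real.sqrt n with hR
  have hnR : n * R = n * capacity W + Real.sqrt n * r := by
    have h : (n : ℝ) = Real.sqrt n * Real.sqrt n := (Real.mul_self_sqrt (Nat.cast_nonneg n)).symm
    rw [hR, mul_add, add_right_inj]
    nth_rewrite 1 [h]
    field_simp
  have hpos : 0 < ⌈Real.exp (n * R)⌉₊ := Nat.ceil_pos.2 (Real.exp_pos _)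
  have hM : (⌈Real.exp (n * R)⌉₊ : ℝ) ≤ Mfb W n ε := by
    rcases le_or_gt (n * R) 0 with h0 | h0
    · have h1 : ⌈Real.exp (n * R)⌉₊ = 1 := by
        refine le_antisymm (Nat.ceil_le.2 ?_) hpos
        simpa using h0
      have hsub : Subsingleton (Fin ⌈Real.exp (n * R)⌉₊) := by
        rw [h1]
        infer_instance
      refine le_Mfb hW hε1 (enc := fun _ _ => Classical.arbitrary X) (dec := fun _ => ⟨0, hpos⟩) ?_
      refine le_of_eq_of_le ?_ hε0
      rw [errProb, Finset.sum_eq_zero, mul_zero]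
      refine fun m _ => Finset.sum_eq_zero fun y _ => ?_
      rw [if_pos (Subsingleton.elim _ _), mul_zero]
    · obtain ⟨enc, dec, h⟩ := hcode _ hpos (by
        rw [← hnR]
        have h1 := Nat.ceil_lt_add_one (Real.exp_pos (n * R)).le
        have h2 := Real.one_lt_exp_iff.2 h0
        linarith)
      exact le_Mfb hW hε1 h
  have hlog : n * R ≤ Real.log (Mfb W n ε) := by
    rw [← Real.log_exp (n * R)]
    exact Real.log_le_log (Real.exp_pos _) ((Nat.le_ceil _).trans hM)
  rw [SOfb, le_div_iff₀ hs]
  linarith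

end

/-- Theorem 1 (Coarse achievability for compound-dispersion channels). -/
theorem coarse_achievability_compound_dispersion
    {X Y : Type*} [Fintype X] [Fintype Y]
    (W : X → Y → ℝ) (hW : IsChannel W) (hcol : NoZeroColumn W)
    (ε : ℝ) (hε0 : 0 < ε) (hε1 : ε < 0.5)
    (hVmin : 0 < Vmin W) (hcompound : Vmin W ≠ Vmax W)
    (β : ℝ) (hβ : β = Real.sqrt (Vmin W / Vmax W))
    (f : ℝ → ℝ)
    (hf : ∀ α : ℝ, f α =
      ε * (α - 1) - (1 - β) * gpdf (2 * Real.sqrt 2 * gcdfInv (α * ε)) *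
        ((Real.sqrt (2 * Real.pi))⁻¹ - gpdf (Real.sqrt 2 * gcdfInv (α * ε)))) :
    β < 1 ∧
    (∃ α : ℝ, 1 < α ∧ α < 1 / (2 * ε) ∧ f α < 0) ∧
    (∀ α : ℝ, 1 < α → α < 1 / (2 * ε) → f α < 0 →
      Filter.liminf (fun n : ℕ =>
          (Real.log (Mfb W n ε) - n * capacity W) / Real.sqrt n) Filter.atTop ≥
        Real.sqrt (Veps W ε) * gcdfInv (α * ε) ∧
      Real.sqrt (Veps W ε) * gcdfInv (α * ε) > Real.sqrt (Veps W ε) * gcdfInv ε) := by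
  have hε : ε < 1 / 2 := by linarith
  have hV1 : Vmin W < Vmax W := by
    obtain ⟨-, -, -, -, -, -, hle⟩ := exists_mem_capacityAchievers_Vmin_Vmax hW hVmin
    exact lt_of_le_of_ne hle hcompound
  have hβ1 : β < 1 := by
    rw [hβ, Real.sqrt_lt' one_pos, one_pow, div_lt_one (hVmin.trans hV1)]
    exact hV1
  refine ⟨hβ1, ?_, fun α hα1 hα2 hα => ?_⟩
  · obtain ⟨u, hu, hεu, hgap⟩ := gcdf_neg_gap hε0 hε hβ1
    have hαε : gcdf u / ε * ε = gcdf u := div_mul_cancel₀ _ hε0.ne'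
    refine ⟨gcdf u / ε, (one_lt_div hε0).2 hεu, ?_, ?_⟩
    · rw [← div_div]
      refine div_lt_div_of_pos_right ?_ hε0
      rw [← gcdf_zero]
      exact strictMono_gcdf hu
    · rw [hf, hαε, gcdfInv_gcdf, mul_sub, mul_comm ε, hαε, mul_one]
      exact hgap
  · have hlow : ε < α * ε := lt_mul_of_one_lt_left hε0 hα1
    have hhigh : α * ε < 1 / 2 := by
      rw [lt_div_iff₀ (by positivity)] at hα2
      linarith
    have hu := gcdf_gcdfInv (hε0.trans hlow) (by linarith)
    have hu0 : gcdfInv (α * ε) < 0 := by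
      rw [← strictMono_gcdf.lt_iff_lt, hu, gcdf_zero]
      exact hhigh
    have hs : 0 < Real.sqrt (Vmin W) := Real.sqrt_pos.2 hVmin
    have hVeps : Veps W ε = Vmin W := if_pos hε
    have hgap := hf α ▸ hα
    rw [hVeps]
    refine ⟨?_, mul_lt_mul_of_pos_left ?_ hs⟩
    · refine le_liminf_of_forall_sub_le (mul_neg_of_pos_of_neg hs hu0).le fun δ hδ =>
        eventually_sub_le_SOfb hW hVmin hε0.le (by linarith) hu0 ?_ hδ
      rw [hu, ← hβ]
      linarith
    · rw [← strictMono_gcdf.lt_iff_lt, hu, gcdf_gcdfInv hε0 (by linarith)]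
      exact hlow

end Paper
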